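/- For every real number x, the limit as n → ∞ of P_n({λ ∈ D_n : 2·S(λ) − log(√(3n)) ≤ x}) equals P(H ≤ x), where P(H ≤ x) = μ({ω : the partial sums H_m(ω) converge to a limit that is ≤ x}). -/

import Mathlib

/-!
The proof is a conditioned (Boltzmann) local limit argument.

Let `t = π/√(12n)` and include each `k ≤ n` independently with probability
`p_k = 1/(e^{tk} + 1)`. Conditioned on the included numbers having sum `n`, the chosen set is a
uniform distinct parts partition of `n`. Fourier inversion in the size (`fourier_coeff`,
`inversion`) therefore writes the characteristic function of `2S - log √(3n)` under `P_n` as a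
ratio of two integrals of the joint characteristic function `psi` of the centred reciprocal sum
and the centred size, the latter scaled by its standard deviation `σ_n`.

As `n → ∞`, `psi n s τ` converges to `∏ cos(s/k) · e^{-τ²/2}` (`tendsto_psi`): indices `k` that
are small compared with `√n` have `p_k ≈ 1/2` and produce the cosines, while the size is governed
by indices of order `√n` and is Gaussian. The two centring corrections vanish
(`tendsto_mean_size`, `tendsto_mean_recip`); the second of these is where `log √(3n)` comes from.
The bound `psi_dominated` permits dominated convergence, giving
`E_n[e^{is(2S - log √(3n))}] → ∏ cos(s/k)` (`tendsto_Fn_div`).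

The product `∏ cos(s/k)` is the characteristic function of the law of the random harmonic sum,
which exists almost surely and has no atoms (`exists_law_H`). Lévy's continuity theorem and the
portmanteau theorem finish the proof.
-/

open scoped BigOperators ENNReal
open MeasureTheory Filter

/-- The uniform probability (as a real number) that a distinct parts partition of `n`
satisfies the predicate `p`. -/
noncomputable def Pn (n : ℕ) (p : Nat.Partition n → Prop) : ℝ :=
  letI := Classical.decPred p
  (((Nat.Partition.distincts n).filter p).card : ℝ) / ((Nat.Partition.distincts n).card : ℝ)

/-- The sum of the reciprocals of the parts of a partition. -/
noncomputable def S {n : ℕ} (lam : Nat.Partition n) : ℝ :=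
  (lam.parts.map (fun j => (j : ℝ)⁻¹)).sum

/-- Partial sums of the random harmonic series: `H_m(ω) = Σ_{k=1}^m ε_k(ω)/k`,
where `ε_k(ω) = 1` if `ω k = true` and `−1` otherwise. -/
noncomputable def Hpart (ω : ℕ → Bool) (m : ℕ) : ℝ :=
  ∑ k ∈ Finset.Icc 1 m, (if ω k then (1 : ℝ) else -1) / k

/-! ### The random harmonic series -/

/-- The law of a fair coin. -/
noncomputable def coin : Measure Bool :=
  (1 / 2 : ℝ≥0∞) • Measure.dirac true + (1 / 2 : ℝ≥0∞) • Measure.dirac false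

instance coin_isProb : IsProbabilityMeasure coin :=
  ⟨by simp [coin, ENNReal.inv_two_add_inv_two]⟩

lemma coin_singleton (b : Bool) : coin {b} = 1 / 2 := by
  cases b <;> simp [coin]

/-- A measure on `ℕ → Bool` giving every cylinder its fair-coin probability is the product
measure. -/
lemma eq_infinitePi_coin (μ : Measure (ℕ → Bool)) [IsProbabilityMeasure μ]
    (hμ : ∀ (s : Finset ℕ) (f : ℕ → Bool),
      μ {ω | ∀ k ∈ s, ω k = f k} = (1 / 2 : ℝ≥0∞) ^ s.card) :
    μ = Measure.infinitePi (fun _ : ℕ => coin) := by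
  refine ((Measure.isProjectiveLimit_infinitePi (fun _ : ℕ => coin)).unique ?_).symm
  intro I
  refine Measure.ext_of_singleton fun g => ?_
  rw [Measure.map_apply (Finset.measurable_restrict I) (measurableSet_singleton g),
    Measure.pi_singleton]
  simp only [coin_singleton, Finset.prod_const]
  have := hμ I (fun k => if h : k ∈ I then g ⟨k, h⟩ else true)
  rw [Finset.card_univ, Fintype.card_coe, ← this]
  congr 1
  ext ω
  simp only [Set.mem_preimage, Set.mem_singleton_iff, Set.mem_ofPred_eq, funext_iff,
    Finset.restrict, Subtype.forall]
  refine forall₂_congr fun k hk => ?_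
  simp [hk]

/-- The `k`-th term `ε_k / k` of the random harmonic series. -/
noncomputable def hterm (k : ℕ) (b : Bool) : ℝ := (if b then (1 : ℝ) else -1) / k

lemma integral_coin {E : Type*} [NormedAddCommGroup E] [NormedSpace ℝ E] [CompleteSpace E]
    (f : Bool → E) : ∫ b, f b ∂coin = (1 / 2 : ℝ) • (f true + f false) := by
  rw [integral_fintype (Integrable.of_finite)]
  simp [Measure.real, coin_singleton]

section coins

variable {μ : Measure (ℕ → Bool)}

lemma Hpart_eq (ω : ℕ → Bool) (m : ℕ) :
    Hpart ω m = ∑ k ∈ Finset.Icc 1 m, hterm k (ω k) := rfl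

lemma measurable_Hpart (m : ℕ) : Measurable (fun ω => Hpart ω m) := by
  simp only [Hpart_eq]
  refine Finset.measurable_sum _ fun k _ => ?_
  exact (measurable_of_finite (hterm k)).comp (measurable_pi_apply k)

lemma measurable_hterm (k : ℕ) : Measurable (fun ω : ℕ → Bool => hterm k (ω k)) :=
  (measurable_of_finite (hterm k)).comp (measurable_pi_apply k)

lemma indep_hterm (hμ : μ = Measure.infinitePi (fun _ : ℕ => coin)) :
    ProbabilityTheory.iIndepFun (fun k (ω : ℕ → Bool) => hterm k (ω k)) μ := by
  subst hμ
  exact ProbabilityTheory.iIndepFun_infinitePi (fun k => measurable_of_finite (hterm k))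

lemma integral_comp_eval (hμ : μ = Measure.infinitePi (fun _ : ℕ => coin))
    {E : Type*} [NormedAddCommGroup E] [NormedSpace ℝ E] [CompleteSpace E]
    (k : ℕ) (f : Bool → E) :
    ∫ ω, f (ω k) ∂μ = (1 / 2 : ℝ) • (f true + f false) := by
  subst hμ
  have h := Measure.infinitePi_map_eval (fun _ : ℕ => coin) k
  have hf : AEStronglyMeasurable f
      ((Measure.infinitePi fun _ : ℕ => coin).map fun ω => ω k) :=
    StronglyMeasurable.of_discrete.aestronglyMeasurable
  rw [← integral_coin f, ← integral_map (measurable_pi_apply k).aemeasurable hf, h]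

lemma charFun_Hpart (hμ : μ = Measure.infinitePi (fun _ : ℕ => coin)) (m : ℕ) (s : ℝ) :
    charFun (μ.map (fun ω => Hpart ω m)) s = ∏ k ∈ Finset.Icc 1 m, (Real.cos (s / k) : ℂ) := by
  simp only [Hpart_eq]
  rw [ProbabilityTheory.iIndepFun.charFun_map_fun_finsetSum_eq_prod
    (fun i _ => (measurable_hterm i).aemeasurable) ((indep_hterm hμ).restrict _)]
  rw [Finset.prod_apply]
  refine Finset.prod_congr rfl fun k _ => ?_
  rw [charFun_apply_real, integral_map (measurable_hterm k).aemeasurable (by fun_prop),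
    integral_comp_eval hμ k (fun b => Complex.exp (s * (hterm k b : ℝ) * Complex.I))]
  rw [Complex.ofReal_cos, Complex.cos, Complex.real_smul]
  simp only [hterm]
  simp only [if_true, Bool.false_eq_true, if_false]
  push_cast
  rw [show (s : ℂ) * (1 / k) * Complex.I = s / k * Complex.I by ring,
    show (s : ℂ) * (-1 / k) * Complex.I = -(s / k) * Complex.I by ring]
  ring

lemma memLp_hterm [IsProbabilityMeasure μ] (k : ℕ) :
    MemLp (fun ω : ℕ → Bool => hterm k (ω k)) 2 μ := by
  refine MemLp.of_bound (measurable_hterm k).aestronglyMeasurable 1 (ae_of_all _ fun ω => ?_)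
  unfold hterm
  rw [norm_div]
  rcases Nat.eq_zero_or_pos k with rfl | hk
  · simp
  · have : (1 : ℝ) ≤ k := by exact_mod_cast hk
    rw [div_le_one (by simp; omega)]
    split_ifs <;> simpa using this

lemma integral_hterm (hμ : μ = Measure.infinitePi (fun _ : ℕ => coin)) (k : ℕ) :
    ∫ ω, hterm k (ω k) ∂μ = 0 := by
  rw [integral_comp_eval hμ k (hterm k)]
  simp [hterm]
  ring

lemma integral_Hpart_sq_le [IsProbabilityMeasure μ]
    (hμ : μ = Measure.infinitePi (fun _ : ℕ => coin)) (m : ℕ) :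
    ∫ ω, Hpart ω m ^ 2 ∂μ ≤ ∑' k : ℕ, 1 / (k : ℝ) ^ 2 := by
  have hmem : MemLp (fun ω => Hpart ω m) 2 μ := by
    simp only [Hpart_eq]
    exact memLp_finsetSum _ fun k _ => memLp_hterm k
  have h0 : ∫ ω, Hpart ω m ∂μ = 0 := by
    simp only [Hpart_eq]
    rw [integral_finsetSum _ fun k _ => (memLp_hterm k).integrable (by norm_num)]
    exact Finset.sum_eq_zero fun k _ => integral_hterm hμ k
  have hv : ProbabilityTheory.variance (fun ω => Hpart ω m) μ
      = ∑ k ∈ Finset.Icc 1 m, 1 / (k : ℝ) ^ 2 := by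
    have := ProbabilityTheory.IndepFun.variance_sum (s := Finset.Icc 1 m)
      (fun k _ => memLp_hterm (μ := μ) k) (fun i _ j _ hij => (indep_hterm hμ).indepFun hij)
    convert this using 1
    · congr 1
      ext ω
      simp [Hpart_eq]
    · refine Finset.sum_congr rfl fun k _ => ?_
      rw [ProbabilityTheory.variance_of_integral_eq_zero (measurable_hterm k).aemeasurable
        (integral_hterm hμ k), integral_comp_eval hμ k (fun b => hterm k b ^ 2)]
      simp [hterm]
      ring
  rw [← ProbabilityTheory.variance_of_integral_eq_zero hmem.aemeasurable h0, hv]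
  exact Summable.sum_le_tsum _ (fun _ _ => by positivity) (Real.summable_one_div_nat_pow.2 (by norm_num))

/-- The random harmonic series converges almost surely, its partial sums being an `L²`-bounded
martingale. -/
lemma ae_exists_tendsto_Hpart [IsProbabilityMeasure μ]
    (hμ : μ = Measure.infinitePi (fun _ : ℕ => coin)) :
    ∀ᵐ ω ∂μ, ∃ l : ℝ, Tendsto (fun m => Hpart ω m) atTop (nhds l) := by
  have hsm : ∀ k, StronglyMeasurable (fun ω : ℕ → Bool => hterm k (ω k)) :=
    fun k => (measurable_hterm k).stronglyMeasurable
  have hmem : ∀ m, MemLp (fun ω => Hpart ω m) 2 μ := fun m => by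
    simp only [Hpart_eq]
    exact memLp_finsetSum _ fun k _ => memLp_hterm k
  have hmart : Martingale (fun m ω => Hpart ω m)
      (Filtration.natural (fun k (ω : ℕ → Bool) => hterm k (ω k)) hsm) μ := by
    refine martingale_of_condExp_sub_eq_zero_nat ?_ ?_ ?_
    · intro m
      refine Finset.stronglyMeasurable_fun_sum (Finset.Icc 1 m)
        (f := fun k (ω : ℕ → Bool) => hterm k (ω k)) fun k hk => ?_
      have := Filtration.stronglyAdapted_natural hsm k
      exact this.mono ((Filtration.natural _ hsm).mono (Finset.mem_Icc.1 hk).2)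
    · exact fun m => (hmem m).integrable (by norm_num)
    · intro m
      have : ((fun ω => Hpart ω (m + 1)) - fun ω => Hpart ω m)
          = fun ω => hterm (m + 1) (ω (m + 1)) := by
        ext ω
        simp [Hpart_eq, Finset.sum_Icc_succ_top]
      rw [this]
      refine ((indep_hterm hμ).condExp_natural_ae_eq_of_lt hsm (Nat.lt_succ_self m)).trans ?_
      exact ae_of_all _ fun _ => integral_hterm hμ (m + 1)
  refine hmart.submartingale.exists_ae_tendsto_of_bdd
    (R := (1 + ∑' k : ℕ, 1 / (k : ℝ) ^ 2).toNNReal) fun m => ?_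
  have hi : Integrable (fun ω => Hpart ω m) μ := (hmem m).integrable (by norm_num)
  rw [eLpNorm_one_eq_lintegral_enorm, ← ofReal_integral_norm_eq_lintegral_enorm hi]
  refine ENNReal.ofReal_le_ofReal ?_
  have h2 : Integrable (fun ω => Hpart ω m ^ 2) μ := (hmem m).integrable_sq
  calc ∫ ω, ‖Hpart ω m‖ ∂μ ≤ ∫ ω, (1 + Hpart ω m ^ 2) ∂μ := by
        refine integral_mono hi.norm ((integrable_const _).add h2) fun ω => ?_
        simp only [Real.norm_eq_abs]
        nlinarith [sq_abs (Hpart ω m), sq_nonneg (|Hpart ω m| - 1), abs_nonneg (Hpart ω m)]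
    _ = 1 + ∫ ω, Hpart ω m ^ 2 ∂μ := by
        rw [integral_add (integrable_const _) h2]; simp
    _ ≤ _ := by gcongr; exact integral_Hpart_sq_le hμ m

/-- Flipping the `k`-th coin. -/
def flipCoin (k : ℕ) (ω : ℕ → Bool) : ℕ → Bool := fun j => if j = k then !(ω j) else ω j

lemma measurable_flipCoin (k : ℕ) : Measurable (flipCoin k) := by
  refine measurable_pi_lambda _ fun j => ?_
  unfold flipCoin
  split_ifs
  · exact (measurable_of_finite (fun b : Bool => !b)).comp (measurable_pi_apply j)
  · exact measurable_pi_apply j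

lemma map_flipCoin [IsProbabilityMeasure μ]
    (hμ : ∀ (s : Finset ℕ) (f : ℕ → Bool),
      μ {ω | ∀ k ∈ s, ω k = f k} = (1 / 2 : ℝ≥0∞) ^ s.card) (k : ℕ) :
    μ.map (flipCoin k) = μ := by
  have : IsProbabilityMeasure (μ.map (flipCoin k)) :=
    Measure.isProbabilityMeasure_map (measurable_flipCoin k).aemeasurable
  refine (eq_infinitePi_coin (μ.map (flipCoin k)) fun s f => ?_).trans
    (eq_infinitePi_coin μ hμ).symm
  rw [Measure.map_apply (measurable_flipCoin k), ← hμ s (flipCoin k f)]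
  · congr 1
    ext ω
    simp only [flipCoin, Set.preimage_ofPred_eq, Set.mem_ofPred_eq]
    refine forall₂_congr fun j _ => ?_
    split_ifs <;> cases ω j <;> cases f j <;> simp
  · have : {ω : ℕ → Bool | ∀ k ∈ s, ω k = f k} = ⋂ k ∈ s, (fun ω => ω k) ⁻¹' {f k} := by
      ext; simp
    rw [this]
    exact Finset.measurableSet_biInter _ fun j _ =>
      measurable_pi_apply j (measurableSet_singleton _)

lemma Hpart_flipCoin (k : ℕ) (hk : 1 ≤ k) (ω : ℕ → Bool) (m : ℕ) (hm : k ≤ m) :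
    Hpart (flipCoin k ω) m = Hpart ω m - 2 * hterm k (ω k) := by
  simp only [Hpart_eq]
  have hkm : k ∈ Finset.Icc 1 m := Finset.mem_Icc.2 ⟨hk, hm⟩
  rw [← Finset.add_sum_erase _ _ hkm, ← Finset.add_sum_erase _ (fun k => hterm k (ω k)) hkm]
  have : ∀ j ∈ (Finset.Icc 1 m).erase k, hterm j (flipCoin k ω j) = hterm j (ω j) := by
    intro j hj
    simp [flipCoin, (Finset.mem_erase.1 hj).1]
  rw [Finset.sum_congr rfl this]
  have : hterm k (flipCoin k ω k) = - hterm k (ω k) := by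
    simp only [flipCoin, hterm, if_true]
    cases ω k <;> simp <;> ring
  rw [this]; ring

/-- The limit of the random harmonic series has no atoms: flipping the `k`-th coin moves the event
`H = x` to an equally likely event on which `|H - x| = 2 / k`, and these are disjoint for
different `k`. -/
lemma measure_limit_eq_zero [IsProbabilityMeasure μ]
    (hμ : ∀ (s : Finset ℕ) (f : ℕ → Bool),
      μ {ω | ∀ k ∈ s, ω k = f k} = (1 / 2 : ℝ≥0∞) ^ s.card) (x : ℝ) :
    μ {ω | Tendsto (fun m => Hpart ω m) atTop (nhds x)} = 0 := by
  set A : Set (ℕ → Bool) := {ω | Tendsto (fun m => Hpart ω m) atTop (nhds x)} with hA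
  have hAm : MeasurableSet A := measurableSet_tendsto (nhds x) measurable_Hpart
  have hm : ∀ k, MeasurableSet (flipCoin (k + 1) ⁻¹' A) := fun k => measurable_flipCoin _ hAm
  have hlim : ∀ k, ∀ ω ∈ flipCoin (k + 1) ⁻¹' A,
      Tendsto (fun m => Hpart ω m) atTop (nhds (x + 2 * hterm (k + 1) (ω (k + 1)))) := by
    intro k ω hω
    have h1 : Tendsto (fun m => Hpart (flipCoin (k + 1) ω) m) atTop (nhds x) := hω
    refine (h1.add_const (2 * hterm (k + 1) (ω (k + 1)))).congr' ?_
    filter_upwards [eventually_ge_atTop (k + 1)] with m hm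
    rw [Hpart_flipCoin _ (by omega) _ _ hm]; ring
  have habs : ∀ k b, |hterm (k + 1) b| = 1 / ((k : ℝ) + 1) := by
    intro k b
    unfold hterm
    have h : (0 : ℝ) < k + 1 := by positivity
    rw [abs_div]
    push_cast
    rw [abs_of_pos h]
    cases b <;> simp
  have hdisj : Pairwise (Function.onFun Disjoint fun k => flipCoin (k + 1) ⁻¹' A) := by
    intro i j hij
    refine Set.disjoint_left.2 fun ω h1 h2 => hij ?_
    have := tendsto_nhds_unique (hlim i ω h1) (hlim j ω h2)
    have h3 : hterm (i + 1) (ω (i + 1)) = hterm (j + 1) (ω (j + 1)) := by linarith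
    have h4 := congrArg abs h3
    rw [habs, habs] at h4
    rw [one_div, one_div, inv_inj] at h4
    exact_mod_cast add_right_cancel h4
  have heq : ∀ k, μ (flipCoin (k + 1) ⁻¹' A) = μ A := fun k => by
    rw [← Measure.map_apply (measurable_flipCoin _) hAm, map_flipCoin hμ]
  by_contra hne
  have h1 : ∑' k : ℕ, μ (flipCoin (k + 1) ⁻¹' A) ≤ μ Set.univ := by
    rw [← measure_iUnion hdisj hm]
    exact measure_mono (Set.subset_univ _)
  simp only [heq, measure_univ] at h1
  rw [ENNReal.tsum_const_eq_top_of_ne_zero hne] at h1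
  simp at h1

/-- The law of the random harmonic series: it has no atoms, its characteristic function is
`s ↦ ∏ cos (s / k)`, and its distribution function is the one in terms of almost sure limits. -/
lemma exists_law_H [IsProbabilityMeasure μ]
    (hμ : ∀ (s : Finset ℕ) (f : ℕ → Bool),
      μ {ω | ∀ k ∈ s, ω k = f k} = (1 / 2 : ℝ≥0∞) ^ s.card) :
    ∃ ν : Measure ℝ, IsProbabilityMeasure ν ∧ (∀ x, ν {x} = 0) ∧
      (∀ x, ν (Set.Iic x) =
        μ {ω | ∃ l : ℝ, Tendsto (fun m => Hpart ω m) atTop (nhds l) ∧ l ≤ x}) ∧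
      ∀ s : ℝ, Tendsto (fun m : ℕ => ∏ k ∈ Finset.Icc 1 m, (Real.cos (s / k) : ℂ)) atTop
        (nhds (charFun ν s)) := by
  have hpi := eq_infinitePi_coin μ hμ
  obtain ⟨H, hHm, hH⟩ := measurable_limit_of_tendsto_metrizable_ae
    (fun m => (measurable_Hpart m).aemeasurable) (ae_exists_tendsto_Hpart hpi)
  refine ⟨μ.map H, Measure.isProbabilityMeasure_map hHm.aemeasurable, fun x => ?_, fun x => ?_,
    fun s => ?_⟩
  · rw [Measure.map_apply hHm (measurableSet_singleton x), ← measure_limit_eq_zero hμ x]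
    refine measure_congr ?_
    filter_upwards [hH] with ω hω
    refine propext ⟨fun h => ?_, fun h => tendsto_nhds_unique hω h⟩
    have : H ω = x := h
    rwa [this] at hω
  · rw [Measure.map_apply hHm measurableSet_Iic]
    refine measure_congr ?_
    filter_upwards [hH] with ω hω
    refine propext ⟨fun h => ⟨H ω, hω, h⟩, ?_⟩
    rintro ⟨l, hl, hlx⟩
    have : H ω = l := tendsto_nhds_unique hω hl
    change H ω ≤ x
    rwa [this]
  · simp only [← charFun_Hpart hpi]
    simp only [charFun_apply_real]
    rw [integral_map hHm.aemeasurable (by fun_prop)]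
    simp_rw [fun m => integral_map (μ := μ) (measurable_Hpart m).aemeasurable
      (f := fun x : ℝ => Complex.exp (s * x * Complex.I)) (by fun_prop)]
    refine tendsto_integral_of_dominated_convergence (fun _ => (1 : ℝ)) (fun m => ?_)
      (integrable_const _) (fun m => ae_of_all _ fun ω => ?_) ?_
    · have := measurable_Hpart m
      fun_prop
    · rw [← Complex.ofReal_mul, Complex.norm_exp_ofReal_mul_I]
    · filter_upwards [hH] with ω hω
      have hc : Continuous (fun x : ℝ => Complex.exp (s * x * Complex.I)) := by fun_prop
      exact (hc.tendsto _).comp hω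

end coins

/-! ### Sums over the Boltzmann weights -/

/-- The probability `e^{-tk} / (1 + e^{-tk})` that `k` is a part in the Boltzmann model with
parameter `t`. -/
noncomputable def bp (t : ℝ) (k : ℕ) : ℝ := 1 / (Real.exp (t * k) + 1)

lemma bp_pos (t : ℝ) (k : ℕ) : 0 < bp t k := by unfold bp; positivity

lemma bp_le_exp (t : ℝ) (k : ℕ) : bp t k ≤ Real.exp (-(t * k)) := by
  unfold bp
  rw [Real.exp_neg, ← one_div]
  exact one_div_le_one_div_of_le (Real.exp_pos _) (by linarith)

lemma bp_le_half {t : ℝ} (ht : 0 ≤ t) (k : ℕ) : bp t k ≤ 1 / 2 := by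
  unfold bp
  have : 1 ≤ Real.exp (t * k) := Real.one_le_exp (by positivity)
  exact one_div_le_one_div_of_le (by norm_num) (by linarith)

lemma summable_pow_mul_exp {t : ℝ} (ht : 0 < t) (j : ℕ) :
    Summable fun k : ℕ => (k : ℝ) ^ j * Real.exp (-(t * k)) := by
  have := Real.summable_pow_mul_exp_neg_nat_mul j ht
  refine this.congr fun k => ?_
  congr 2; ring

lemma tsum_pow_mul_exp_le {t : ℝ} (ht : 0 < t) (j : ℕ) :
    ∑' k : ℕ, ((k + 1 : ℕ) : ℝ) ^ j * Real.exp (-(t * (k + 1 : ℕ)))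
      ≤ j.factorial * (2 / t) ^ (j + 1) := by
  have hr : Real.exp (-(t / 2)) < 1 := Real.exp_lt_one_iff.2 (by linarith)
  have hgeo : HasSum (fun k : ℕ => j.factorial * (2 / t) ^ j * Real.exp (-(t / 2)) *
      Real.exp (-(t / 2)) ^ k)
      (j.factorial * (2 / t) ^ j * Real.exp (-(t / 2)) * (1 - Real.exp (-(t / 2)))⁻¹) :=
    (hasSum_geometric_of_lt_one (Real.exp_pos _).le hr).mul_left _
  have hle : ∀ k : ℕ, ((k + 1 : ℕ) : ℝ) ^ j * Real.exp (-(t * (k + 1 : ℕ)))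
      ≤ j.factorial * (2 / t) ^ j * Real.exp (-(t / 2)) * Real.exp (-(t / 2)) ^ k := by
    intro k
    have hx : 0 ≤ t / 2 * (k + 1 : ℕ) := by positivity
    have h1 := Real.pow_div_factorial_le_exp _ hx j
    rw [div_le_iff₀ (by positivity), mul_pow] at h1
    have h2 : ((k + 1 : ℕ) : ℝ) ^ j ≤ j.factorial * (2 / t) ^ j *
        Real.exp (t / 2 * (k + 1 : ℕ)) := by
      have h3 : (2 / t) ^ j * (t / 2) ^ j = 1 := by
        rw [← mul_pow]; field_simp; simp
      calc ((k + 1 : ℕ) : ℝ) ^ j = (2 / t) ^ j * ((t / 2) ^ j * ((k + 1 : ℕ) : ℝ) ^ j) := by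
            rw [← mul_assoc, h3, one_mul]
        _ ≤ (2 / t) ^ j * (Real.exp (t / 2 * (k + 1 : ℕ)) * j.factorial) := by gcongr
        _ = _ := by ring
    calc _ ≤ j.factorial * (2 / t) ^ j *
        Real.exp (t / 2 * (k + 1 : ℕ)) * Real.exp (-(t * (k + 1 : ℕ))) := by gcongr
      _ = _ := by
        rw [mul_assoc, mul_assoc (_ * _), ← Real.exp_nat_mul, ← Real.exp_add, ← Real.exp_add]
        congr 2
        push_cast
        ring
  refine (Summable.tsum_le_tsum hle ?_ hgeo.summable).trans ?_
  · exact (summable_nat_add_iff 1).2 (summable_pow_mul_exp ht j)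
  rw [hgeo.tsum_eq, pow_succ, ← mul_assoc, mul_assoc (_ * _)]
  gcongr
  rw [← div_eq_mul_inv, div_le_div_iff₀ (by linarith) ht]
  have h4 : (t / 2 + 1) * Real.exp (-(t / 2)) ≤ 1 := by
    have := Real.add_one_le_exp (t / 2)
    calc _ ≤ Real.exp (t / 2) * Real.exp (-(t / 2)) := by gcongr
      _ = 1 := by rw [← Real.exp_add]; simp
  linarith

lemma sum_pow_mul_exp_le {t : ℝ} (ht : 0 < t) (j n : ℕ) :
    ∑ k ∈ Finset.Icc 1 n, (k : ℝ) ^ j * Real.exp (-(t * k))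
      ≤ j.factorial * (2 / t) ^ (j + 1) := by
  refine le_trans ?_ (tsum_pow_mul_exp_le ht j)
  rw [← Finset.Ico_add_one_right_eq_Icc, Finset.sum_Ico_eq_sum_range]
  simp only [Nat.add_sub_cancel]
  simp_rw [fun k => add_comm 1 k]
  exact Summable.sum_le_tsum (f := fun k : ℕ => ((k + 1 : ℕ) : ℝ) ^ j *
    Real.exp (-(t * (k + 1 : ℕ)))) _ (fun _ _ => by positivity)
    ((summable_nat_add_iff 1).2 (summable_pow_mul_exp ht j))

/-- Expanding `1 / (e^{tk} + 1)` as an alternating geometric series and exchanging the sums. -/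
lemma tsum_mul_bp {t : ℝ} (ht : 0 < t) (a : ℕ → ℝ) (ha : ∀ k, 0 ≤ a k) (ha0 : a 0 = 0)
    (G : ℕ → ℝ) (hG : ∀ j : ℕ, HasSum (fun k : ℕ => a k * Real.exp (-(t * (j + 1) * k))) (G j))
    (hS : Summable G) :
    Summable (fun k => a k * bp t k) ∧ ∑' k, a k * bp t k = ∑' j : ℕ, (-1) ^ j * G j := by
  have hsum : Summable (Function.uncurry fun (j k : ℕ) =>
      (-1 : ℝ) ^ j * (a k * Real.exp (-(t * (j + 1) * k)))) := by
    refine Summable.of_norm ?_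
    have : (fun p : ℕ × ℕ => ‖Function.uncurry (fun (j k : ℕ) =>
        (-1 : ℝ) ^ j * (a k * Real.exp (-(t * (j + 1) * k)))) p‖)
        = fun p : ℕ × ℕ => a p.2 * Real.exp (-(t * (p.1 + 1) * p.2)) := by
      ext ⟨j, k⟩
      simp [Function.uncurry, abs_of_nonneg (ha k)]
    rw [this]
    refine (summable_prod_of_nonneg ?_).2 ⟨fun j => (hG j).summable, ?_⟩
    · exact fun p => mul_nonneg (ha _) (Real.exp_pos _).le
    · exact hS.congr fun j => ((hG j).tsum_eq).symm
  have hk : ∀ k : ℕ, HasSum (fun j : ℕ => (-1 : ℝ) ^ j * (a k * Real.exp (-(t * (j + 1) * k))))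
      (a k * bp t k) := by
    intro k
    rcases Nat.eq_zero_or_pos k with rfl | hk
    · simp [ha0]
    have hk' : (0 : ℝ) < k := by exact_mod_cast hk
    have hlt : Real.exp (-(t * k)) < 1 := Real.exp_lt_one_iff.2 (by nlinarith [mul_pos ht hk'])
    have h1 : HasSum (fun j : ℕ => (-Real.exp (-(t * k))) ^ j) (1 - -Real.exp (-(t * k)))⁻¹ :=
      hasSum_geometric_of_abs_lt_one (by rw [abs_neg, abs_of_pos (Real.exp_pos _)]; exact hlt)
    have e1 : (fun j : ℕ => (-1 : ℝ) ^ j * (a k * Real.exp (-(t * (j + 1) * k))))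
        = fun j : ℕ => a k * Real.exp (-(t * k)) * (-Real.exp (-(t * k))) ^ j := by
      funext j
      rw [neg_pow (Real.exp _), ← Real.exp_nat_mul,
        show -(t * (j + 1) * k) = -(t * k) + j * (-(t * k)) by ring, Real.exp_add]
      ring
    have e2 : a k * bp t k
        = a k * Real.exp (-(t * k)) * (1 - -Real.exp (-(t * k)))⁻¹ := by
      unfold bp
      rw [mul_assoc]
      congr 1
      rw [Real.exp_neg]
      have := Real.exp_pos (t * k)
      rw [sub_neg_eq_add, ← div_eq_mul_inv, div_eq_div_iff (by positivity) (by positivity)]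
      field_simp
    rw [e1, e2]
    exact h1.mul_left _
  have h2 : HasSum (fun k => a k * bp t k) (∑' j : ℕ, (-1) ^ j * G j) := by
    have h3 : Summable (Function.uncurry fun (k j : ℕ) =>
      (-1 : ℝ) ^ j * (a k * Real.exp (-(t * (j + 1) * k)))) := by
      have := (Equiv.prodComm ℕ ℕ).summable_iff.2 hsum
      exact this
    have h4 := h3.hasSum.prod_fiberwise hk
    convert h4 using 1
    have h5 : ∑' p : ℕ × ℕ, (Function.uncurry fun (k j : ℕ) =>
        (-1 : ℝ) ^ j * (a k * Real.exp (-(t * (j + 1) * k)))) p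
        = ∑' p : ℕ × ℕ, (Function.uncurry fun (j k : ℕ) =>
        (-1 : ℝ) ^ j * (a k * Real.exp (-(t * (j + 1) * k)))) p :=
      (Equiv.prodComm ℕ ℕ).tsum_eq (Function.uncurry fun (j k : ℕ) =>
        (-1 : ℝ) ^ j * (a k * Real.exp (-(t * (j + 1) * k))))
    rw [h5]
    exact (hsum.hasSum.prod_fiberwise fun j => (hG j).mul_left _).tsum_eq
  exact ⟨h2.summable, h2.tsum_eq⟩

/-- The tail of a Boltzmann sum beyond the first `n` terms. The hypothesis trades a factor `n⁻²`
for a higher moment; with `n t²` constant this makes the tail small enough. -/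
lemma tsum_sub_sum_le {t : ℝ} (ht : 0 < t) (a : ℕ → ℝ) (ha : ∀ k, 0 ≤ a k) (ha0 : a 0 = 0)
    (m n : ℕ) (hn : 0 < n) (hak : ∀ k, n < k → a k ≤ (k : ℝ) ^ m / n ^ 2)
    (hs : Summable (fun k => a k * bp t k)) :
    |∑' k, a k * bp t k - ∑ k ∈ Finset.Icc 1 n, a k * bp t k|
      ≤ m.factorial * (2 / t) ^ (m + 1) / n ^ 2 := by
  have h0 : ∑ k ∈ Finset.Icc 1 n, a k * bp t k = ∑ k ∈ Finset.range (n + 1), a k * bp t k := by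
    rw [Finset.sum_range_succ', ha0, zero_mul, add_zero, ← Finset.Ico_add_one_right_eq_Icc,
      Finset.sum_Ico_eq_sum_range]
    simp [add_comm]
  have h1 := hs.sum_add_tsum_nat_add (n + 1)
  rw [h0, ← h1, add_sub_cancel_left]
  have hnn : ∀ k, 0 ≤ a k * bp t k := fun k => mul_nonneg (ha k) (bp_pos t k).le
  rw [abs_of_nonneg (tsum_nonneg fun k => hnn _)]
  obtain ⟨b, hb⟩ : ∃ b : ℕ → ℝ, ∀ k : ℕ, b k = (k : ℝ) ^ m * Real.exp (-(t * k)) :=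
    ⟨_, fun _ => rfl⟩
  have hb0 : ∀ k, 0 ≤ b k := fun k => by rw [hb]; positivity
  have hse : Summable b := (summable_pow_mul_exp ht m).congr fun k => (hb k).symm
  have hle : ∀ k : ℕ, a (k + (n + 1)) * bp t (k + (n + 1)) ≤ b (k + (n + 1)) / n ^ 2 := by
    intro k
    have h := hak (k + (n + 1)) (by omega)
    rw [hb]
    calc _ ≤ (((k + (n + 1) : ℕ) : ℝ) ^ m / n ^ 2) * Real.exp (-(t * (k + (n + 1) : ℕ))) :=
          mul_le_mul h (bp_le_exp _ _) (bp_pos _ _).le (by positivity)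
      _ = _ := by ring
  have hs1 : Summable fun k => a (k + (n + 1)) * bp t (k + (n + 1)) :=
    (summable_nat_add_iff (f := fun k => a k * bp t k) (n + 1)).2 hs
  have hs2 : Summable fun k => b (k + (n + 1)) / (n : ℝ) ^ 2 :=
    ((summable_nat_add_iff (f := b) (n + 1)).2 hse).div_const _
  refine (hs1.tsum_le_tsum hle hs2).trans ?_
  rw [tsum_div_const]
  gcongr
  have h3 := tsum_pow_mul_exp_le ht m
  simp_rw [← hb] at h3
  refine le_trans ?_ h3
  have h2 := ((summable_nat_add_iff (f := b) 1).2 hse).sum_add_tsum_nat_add n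
  have h4 : 0 ≤ ∑ i ∈ Finset.range n, b (i + 1) := Finset.sum_nonneg fun _ _ => hb0 _
  simp only [← add_assoc]
  linarith

/-! ### The expected size -/

lemma one_sub_exp_pos {u : ℝ} (hu : 0 < u) : 0 < 1 - Real.exp (-u) := by
  have : Real.exp (-u) < 1 := Real.exp_lt_one_iff.2 (by linarith)
  linarith

lemma exp_neg_eq_sinh (u : ℝ) :
    1 - Real.exp (-u) = 2 * Real.exp (-(u / 2)) * Real.sinh (u / 2) := by
  rw [Real.sinh_eq]
  have h1 : Real.exp (-(u / 2)) * Real.exp (u / 2) = 1 := by rw [← Real.exp_add]; simp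
  have h2 : Real.exp (-(u / 2)) * Real.exp (-(u / 2)) = Real.exp (-u) := by
    rw [← Real.exp_add]; congr 1; ring
  linear_combination -h1 + h2

/-- `u² ∑ₖ k e^{-uk} = u² e^{-u} / (1 - e^{-u})²` lies between `1 - u` and `1`. -/
lemma sq_mul_geom_bounds {u : ℝ} (hu : 0 < u) :
    u ^ 2 * (Real.exp (-u) / (1 - Real.exp (-u)) ^ 2) ≤ 1 ∧
      1 - u ≤ u ^ 2 * (Real.exp (-u) / (1 - Real.exp (-u)) ^ 2) := by
  have h0 := one_sub_exp_pos hu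
  constructor
  · rw [← mul_div_assoc, div_le_one (by positivity)]
    have h1 : u / 2 ≤ Real.sinh (u / 2) := Real.self_le_sinh_iff.2 (by linarith)
    have h2 : Real.exp (-u) = Real.exp (-(u / 2)) ^ 2 := by
      rw [← Real.exp_nat_mul]; congr 1; push_cast; ring
    have h3 : u * Real.exp (-(u / 2)) ≤ 1 - Real.exp (-u) := by
      rw [exp_neg_eq_sinh]
      nlinarith [Real.exp_pos (-(u / 2))]
    rw [h2] at h3 ⊢
    rw [← mul_pow]
    exact pow_le_pow_left₀ (by positivity) h3 2
  · have h1 : 1 - Real.exp (-u) ≤ u := by linarith [Real.add_one_le_exp (-u)]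
    have h2 : 1 - u ≤ Real.exp (-u) := by linarith
    refine h2.trans ?_
    rw [← mul_div_assoc, le_div_iff₀ (by positivity), mul_comm]
    have := pow_le_pow_left₀ h0.le h1 2
    gcongr

lemma hasSum_alternating : HasSum (fun j : ℕ => (-1 : ℝ) ^ j * (1 / ((j : ℝ) + 1) ^ 2))
    (Real.pi ^ 2 / 12) := by
  have h := hasSum_zeta_two
  have hs : Summable (fun n : ℕ => (1 : ℝ) / (n : ℝ) ^ 2) := h.summable
  have h1 : HasSum (fun j : ℕ => 1 / ((j : ℝ) + 1) ^ 2) (Real.pi ^ 2 / 6) := by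
    have := (hasSum_nat_add_iff' 1).2 h
    simpa using this
  have he : HasSum (fun i : ℕ => 1 / (((2 * i + 1 : ℕ) : ℝ) + 1) ^ 2) (Real.pi ^ 2 / 24) := by
    have := h1.mul_left (1 / 4)
    convert! this using 1
    · funext i
      push_cast
      have : (i : ℝ) + 1 ≠ 0 := by positivity
      have : 2 * (i : ℝ) + 1 + 1 ≠ 0 := by positivity
      field_simp
      ring
    · ring
  have hev : Summable (fun i : ℕ => 1 / (((2 * i : ℕ) : ℝ) + 1) ^ 2) :=
    h1.summable.comp_injective (i := fun i : ℕ => 2 * i) fun a b h => by simpa using h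
  have h2 : ∑' i : ℕ, 1 / (((2 * i : ℕ) : ℝ) + 1) ^ 2 + Real.pi ^ 2 / 24 = Real.pi ^ 2 / 6 := by
    have := hev.hasSum.even_add_odd (f := fun j : ℕ => 1 / ((j : ℝ) + 1) ^ 2) he
    exact this.unique h1
  have h3 : HasSum (fun i : ℕ => 1 / (((2 * i : ℕ) : ℝ) + 1) ^ 2) (Real.pi ^ 2 / 8) := by
    have := hev.hasSum
    rwa [show ∑' i : ℕ, 1 / (((2 * i : ℕ) : ℝ) + 1) ^ 2 = Real.pi ^ 2 / 8 by linarith] at this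
  have := HasSum.even_add_odd (f := fun j : ℕ => (-1 : ℝ) ^ j * (1 / ((j : ℝ) + 1) ^ 2))
    (m := Real.pi ^ 2 / 8) (m' := -(Real.pi ^ 2 / 24)) ?_ ?_
  · convert! this using 1; ring
  · simpa [pow_mul] using h3
  · simpa [pow_succ, pow_mul] using he.neg

/-- Asymptotics of the expected size, `t² ∑ k p_k → ∑ (-1)^j / (j+1)² = π²/12`. The termwise error
is `O(min(1, u))` with `u = t(j+1)`; interpolating it as `u^{3/4}` keeps the sum over `j` convergent,
and a rate better than `t^{1/2}` is what survives division by `σ_n ≍ t^{-3/2}`. -/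
lemma mean_size_aux : ∃ C : ℝ, ∀ t : ℝ, 0 < t →
    Summable (fun k : ℕ => (k : ℝ) * bp t k) ∧
    |t ^ 2 * ∑' k : ℕ, (k : ℝ) * bp t k - Real.pi ^ 2 / 12| ≤ C * t ^ (3 / 4 : ℝ) := by
  have hsum54 : Summable (fun j : ℕ => 1 / ((j : ℝ) + 1) ^ (5 / 4 : ℝ)) := by
    have := (summable_nat_add_iff 1).2 (Real.summable_one_div_nat_rpow (p := 5 / 4).2 (by norm_num))
    simpa using this
  refine ⟨∑' j : ℕ, 1 / ((j : ℝ) + 1) ^ (5 / 4 : ℝ), fun t ht => ?_⟩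
  set G : ℕ → ℝ := fun j => Real.exp (-(t * (j + 1))) / (1 - Real.exp (-(t * (j + 1)))) ^ 2 with hGd
  have hu : ∀ j : ℕ, 0 < t * ((j : ℝ) + 1) := fun j => by positivity
  have hG : ∀ j : ℕ, HasSum (fun k : ℕ => (k : ℝ) * Real.exp (-(t * (j + 1) * k))) (G j) := by
    intro j
    have hlt : ‖Real.exp (-(t * (j + 1)))‖ < 1 := by
      rw [Real.norm_eq_abs, abs_of_pos (Real.exp_pos _)]
      linarith [one_sub_exp_pos (hu j)]
    have := hasSum_coe_mul_geometric_of_norm_lt_one hlt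
    refine this.congr_fun ?_ |> fun h => h
    intro k
    rw [← Real.exp_nat_mul]
    congr 2; ring
  have hGle : ∀ j : ℕ, (t * ((j : ℝ) + 1)) ^ 2 * G j ≤ 1 := fun j => (sq_mul_geom_bounds (hu j)).1
  have hGge : ∀ j : ℕ, 1 - t * ((j : ℝ) + 1) ≤ (t * ((j : ℝ) + 1)) ^ 2 * G j :=
    fun j => (sq_mul_geom_bounds (hu j)).2
  have hG0 : ∀ j : ℕ, 0 ≤ G j := fun j => by simp only [hGd]; positivity
  have hsq : Summable (fun j : ℕ => 1 / ((j : ℝ) + 1) ^ 2) := by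
    have := (summable_nat_add_iff 1).2 hasSum_zeta_two.summable
    simpa using this
  have hS : Summable G := by
    refine Summable.of_nonneg_of_le hG0 (fun j => ?_) (hsq.mul_left (1 / t ^ 2))
    have h := hGle j
    have : (0 : ℝ) < (j : ℝ) + 1 := by positivity
    rw [← mul_comm (G j), ← le_div_iff₀ (by positivity)] at h
    refine h.trans (le_of_eq ?_)
    field_simp
  obtain ⟨h1, h2⟩ := tsum_mul_bp ht (fun k => (k : ℝ)) (fun k => by positivity) (by simp) G hG hS
  refine ⟨h1, ?_⟩
  have hS' : Summable (fun j : ℕ => (-1 : ℝ) ^ j * G j) := by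
    refine Summable.of_norm (hS.congr fun j => ?_)
    simp [abs_of_nonneg (hG0 j)]
  have hd : HasSum (fun j : ℕ => t ^ 2 * ((-1 : ℝ) ^ j * G j) -
      (-1 : ℝ) ^ j * (1 / ((j : ℝ) + 1) ^ 2))
      (t ^ 2 * ∑' k : ℕ, (k : ℝ) * bp t k - Real.pi ^ 2 / 12) := by
    rw [h2]
    exact (hS'.hasSum.mul_left _).sub hasSum_alternating
  rw [← hd.tsum_eq, ← Real.norm_eq_abs]
  have hb : ∀ j : ℕ, ‖t ^ 2 * ((-1 : ℝ) ^ j * G j) - (-1 : ℝ) ^ j * (1 / ((j : ℝ) + 1) ^ 2)‖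
      ≤ (1 / ((j : ℝ) + 1) ^ (5 / 4 : ℝ)) * t ^ (3 / 4 : ℝ) := by
    intro j
    have hj : (0 : ℝ) < (j : ℝ) + 1 := by positivity
    have e : t ^ 2 * ((-1 : ℝ) ^ j * G j) - (-1 : ℝ) ^ j * (1 / ((j : ℝ) + 1) ^ 2)
        = (-1) ^ j * (((t * ((j : ℝ) + 1)) ^ 2 * G j - 1) / ((j : ℝ) + 1) ^ 2) := by
      field_simp
    rw [e, norm_mul, norm_pow, norm_neg, norm_one, one_pow, one_mul, norm_div, Real.norm_eq_abs,
      abs_of_nonpos (by linarith [hGle j])]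
    have h3 : -((t * ((j : ℝ) + 1)) ^ 2 * G j - 1) ≤ (t * ((j : ℝ) + 1)) ^ (3 / 4 : ℝ) := by
      rcases le_total 1 (t * ((j : ℝ) + 1)) with h | h
      · have := Real.one_le_rpow h (z := 3 / 4) (by norm_num)
        have : 0 ≤ (t * ((j : ℝ) + 1)) ^ 2 * G j := mul_nonneg (by positivity) (hG0 j)
        linarith
      · have := Real.rpow_le_rpow_of_exponent_ge (hu j) h (show (3 / 4 : ℝ) ≤ 1 by norm_num)
        rw [Real.rpow_one] at this
        linarith [hGge j]
    have h4 : ‖((j : ℝ) + 1) ^ 2‖ = ((j : ℝ) + 1) ^ (3 / 4 : ℝ) * ((j : ℝ) + 1) ^ (5 / 4 : ℝ) := by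
      rw [← Real.rpow_add hj, Real.norm_eq_abs, abs_of_pos (by positivity)]
      norm_num
    rw [h4, Real.mul_rpow ht.le hj.le] at *
    have p1 : 0 < ((j : ℝ) + 1) ^ (3 / 4 : ℝ) := by positivity
    have p2 : 0 < ((j : ℝ) + 1) ^ (5 / 4 : ℝ) := by positivity
    rw [div_le_iff₀ (by positivity)]
    refine h3.trans (le_of_eq ?_)
    field_simp
  rw [← tsum_mul_right]
  exact tsum_of_norm_bounded (hsum54.mul_right _).hasSum hb

/-! ### The expected sum of reciprocals -/

lemma sinh_div_mono {a b : ℝ} (hb : 0 < b) (hab : b ≤ a) :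
    a * Real.sinh b ≤ b * Real.sinh a := by
  have hconv : ConvexOn ℝ (Set.Ici 0) Real.sinh := by
    refine MonotoneOn.convexOn_of_deriv (convex_Ici 0) Real.continuous_sinh.continuousOn
      Real.differentiable_sinh.differentiableOn ?_
    rw [Real.deriv_sinh, interior_Ici]
    intro x hx y hy hxy
    have hx : 0 < x := hx
    have hy : 0 < y := hy
    exact Real.cosh_le_cosh.2 (by rwa [abs_of_pos hx, abs_of_pos hy])
  have ha : 0 < a := hb.trans_le hab
  have h := hconv.2 (Set.mem_Ici.2 le_rfl) (Set.mem_Ici.2 ha.le)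
    (show 0 ≤ 1 - b / a by rw [sub_nonneg, div_le_one ha]; exact hab)
    (show 0 ≤ b / a by positivity) (by ring)
  simp only [smul_eq_mul, mul_zero, zero_add, Real.sinh_zero] at h
  rw [div_mul_cancel₀ _ ha.ne', div_mul_eq_mul_div, le_div_iff₀ ha] at h
  linarith

/-- `log ((1 - e^{-u}) / u)`, a convex function of `u > 0` vanishing at `0⁺`. -/
noncomputable def gaux (u : ℝ) : ℝ := Real.log ((1 - Real.exp (-u)) / u)

lemma gaux_eq {u : ℝ} (hu : 0 < u) :
    Real.log (1 - Real.exp (-u)) = gaux u + Real.log u := by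
  rw [gaux, Real.log_div (one_sub_exp_pos hu).ne' hu.ne']; ring

/-- Midpoint convexity of `gaux`. -/
lemma gaux_midpoint {x t : ℝ} (ht : 0 < t) (htx : t < x) :
    2 * gaux x ≤ gaux (x - t) + gaux (x + t) := by
  have hx : 0 < x := ht.trans htx
  have h1 := one_sub_exp_pos hx
  have h2 := one_sub_exp_pos (show 0 < x - t by linarith)
  have h3 := one_sub_exp_pos (show 0 < x + t by linarith)
  have p2 : 0 < x - t := by linarith
  have p3 : 0 < x + t := by linarith
  unfold gaux
  rw [← Real.log_mul (by positivity) (by positivity), two_mul,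
    ← Real.log_mul (by positivity) (by positivity)]
  refine Real.log_le_log (by positivity) ?_
  rw [div_mul_div_comm, div_mul_div_comm, div_le_div_iff₀ (by positivity) (by positivity)]
  rw [exp_neg_eq_sinh x, exp_neg_eq_sinh (x - t), exp_neg_eq_sinh (x + t)]
  have e1 : Real.exp (-((x - t) / 2)) * Real.exp (-((x + t) / 2)) = Real.exp (-(x / 2)) ^ 2 := by
    rw [← Real.exp_add, ← Real.exp_nat_mul]; congr 1; push_cast; ring
  have e2 : Real.sinh ((x - t) / 2) * Real.sinh ((x + t) / 2)
      = Real.sinh (x / 2) ^ 2 - Real.sinh (t / 2) ^ 2 := by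
    rw [sub_div, add_div, Real.sinh_sub, Real.sinh_add]
    have := Real.cosh_sq (x / 2)
    have := Real.cosh_sq (t / 2)
    linear_combination (Real.sinh (x/2))^2 * Real.cosh_sq (t / 2) -
      (Real.sinh (t/2))^2 * Real.cosh_sq (x / 2)
  have h4 : x * Real.sinh (t / 2) ≤ t * Real.sinh (x / 2) := by
    have := sinh_div_mono (show 0 < t / 2 by linarith) (show t / 2 ≤ x / 2 by linarith)
    linarith
  have h5 : 0 ≤ x * Real.sinh (t / 2) :=
    mul_nonneg hx.le (Real.sinh_nonneg_iff.2 (by linarith))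
  have h6 := pow_le_pow_left₀ h5 h4 2
  have h7 : 0 < 4 * Real.exp (-(x / 2)) ^ 2 := by positivity
  calc _ = 4 * Real.exp (-(x / 2)) ^ 2 * (Real.sinh (x / 2) ^ 2 * (x ^ 2 - t ^ 2)) := by ring
    _ ≤ 4 * Real.exp (-(x / 2)) ^ 2 *
        ((Real.sinh (x / 2) ^ 2 - Real.sinh (t / 2) ^ 2) * x ^ 2) := by
        refine mul_le_mul_of_nonneg_left ?_ h7.le
        nlinarith
    _ = _ := by rw [← e2, ← e1]; ring

lemma tendsto_gaux : Tendsto gaux (nhdsWithin 0 (Set.Ioi 0)) (nhds 0) := by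
  have h : Tendsto (fun u : ℝ => (1 - Real.exp (-u)) / u) (nhdsWithin 0 (Set.Ioi 0)) (nhds 1) := by
    refine tendsto_of_tendsto_of_tendsto_of_le_of_le' (g := fun u : ℝ => Real.exp (-u))
      (h := fun _ => 1) ?_ tendsto_const_nhds ?_ ?_
    · have : Continuous fun u : ℝ => Real.exp (-u) := by fun_prop
      have := this.tendsto 0
      rw [neg_zero, Real.exp_zero] at this
      exact this.mono_left nhdsWithin_le_nhds
    · filter_upwards [self_mem_nhdsWithin] with u hu
      have hu : 0 < u := hu
      rw [le_div_iff₀ hu]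
      have h1 := Real.add_one_le_exp u
      have h2 : Real.exp (-u) * Real.exp u = 1 := by rw [← Real.exp_add]; simp
      nlinarith [Real.exp_pos (-u)]
    · filter_upwards [self_mem_nhdsWithin] with u hu
      have hu : 0 < u := hu
      rw [div_le_one hu]
      linarith [Real.add_one_le_exp (-u)]
  have := h.log one_ne_zero
  rwa [Real.log_one] at this

/-- Asymptotics of the expected reciprocal sum, `2 ∑ p_k / k = log (π/2) - log t + o(1)` as
`t → 0`. Expanding gives the alternating series `∑ (-1)^j (-log (1 - e^{-t(j+1)}))`; replacing
`1 - e^{-u}` by `u` turns its partial sums into logarithms of Wallis products, and the errors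
`gaux u` telescope by convexity. -/
lemma mean_recip_aux {t : ℝ} (ht : 0 < t) :
    Summable (fun k : ℕ => (1 / (k : ℝ)) * bp t k) ∧
    Real.log (Real.pi / 2) - Real.log t + gaux (2 * t) - 2 * gaux t
      ≤ 2 * ∑' k : ℕ, (1 / (k : ℝ)) * bp t k ∧
    2 * ∑' k : ℕ, (1 / (k : ℝ)) * bp t k ≤ Real.log (Real.pi / 2) - Real.log t - gaux t := by
  set G : ℕ → ℝ := fun j => -Real.log (1 - Real.exp (-(t * (j + 1)))) with hGd
  have hu : ∀ j : ℕ, 0 < t * ((j : ℝ) + 1) := fun j => by positivity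
  have hG : ∀ j : ℕ, HasSum (fun k : ℕ => (1 / (k : ℝ)) * Real.exp (-(t * (j + 1) * k))) (G j) := by
    intro j
    have hlt : |Real.exp (-(t * (j + 1)))| < 1 := by
      rw [abs_of_pos (Real.exp_pos _)]
      linarith [one_sub_exp_pos (hu j)]
    have := Real.hasSum_pow_div_log_of_abs_lt_one hlt
    have h2 : HasSum (fun k : ℕ => (1 / ((k + 1 : ℕ) : ℝ)) *
        Real.exp (-(t * (j + 1) * (k + 1 : ℕ)))) (G j) := by
      have e : (fun k : ℕ => (1 / ((k + 1 : ℕ) : ℝ)) *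
        Real.exp (-(t * (j + 1) * (k + 1 : ℕ)))) =
        fun n : ℕ => Real.exp (-(t * (j + 1))) ^ (n + 1) / (n + 1) := by
        funext k
        rw [← Real.exp_nat_mul]
        push_cast
        rw [div_mul_eq_mul_div, one_mul]
        congr 2; ring
      rw [e]; exact this
    have h3 := (hasSum_nat_add_iff (f := fun k : ℕ => (1 / (k : ℝ)) *
        Real.exp (-(t * (j + 1) * k))) 1).1 h2
    simpa using h3
  have hG0 : ∀ j : ℕ, 0 ≤ G j := fun j => by
    refine (hG j).nonneg fun k => by positivity
  have hS : Summable G := by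
    have hr : Real.exp (-t) < 1 := Real.exp_lt_one_iff.2 (by linarith)
    have hgeo := (summable_geometric_of_lt_one (Real.exp_pos (-t)).le hr).mul_left
      (Real.exp (-t) / (1 - Real.exp (-t)))
    refine Summable.of_nonneg_of_le hG0 (fun j => ?_) hgeo
    have p1 := one_sub_exp_pos (hu j)
    have p2 := one_sub_exp_pos ht
    have h1 := Real.one_sub_inv_le_log_of_pos p1
    have h2 : Real.exp (-(t * (j + 1))) = Real.exp (-t) * Real.exp (-t) ^ j := by
      rw [← pow_succ', ← Real.exp_nat_mul]; congr 1; push_cast; ring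
    have h3 : Real.exp (-(t * (j + 1))) ≤ Real.exp (-t) := by
      refine Real.exp_le_exp.2 ?_
      have : 0 ≤ t * (j : ℝ) := by positivity
      linarith
    calc G j ≤ (1 - Real.exp (-(t * (j + 1))))⁻¹ - 1 := by simp only [hGd]; linarith
      _ = Real.exp (-(t * (j + 1))) / (1 - Real.exp (-(t * (j + 1)))) := by field_simp; ring
      _ ≤ Real.exp (-(t * (j + 1))) / (1 - Real.exp (-t)) := by gcongr
      _ = _ := by rw [h2]; ring
  obtain ⟨h1, h2⟩ := tsum_mul_bp ht (fun k => 1 / (k : ℝ)) (fun k => by positivity) (by simp) G hG hS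
  have hS' : Summable (fun j : ℕ => (-1 : ℝ) ^ j * G j) := by
    refine Summable.of_norm (hS.congr fun j => ?_)
    simp [abs_of_nonneg (hG0 j)]
  refine ⟨h1, ?_⟩
  rw [h2]
  have hlim : Tendsto (fun J : ℕ => 2 * ∑ j ∈ Finset.range (2 * J), (-1 : ℝ) ^ j * G j) atTop
      (nhds (2 * ∑' j : ℕ, (-1 : ℝ) ^ j * G j)) :=
    (hS'.hasSum.tendsto_sum_nat.comp (tendsto_id.const_mul_atTop' (by norm_num))).const_mul 2
  -- The even partial sums split into a Wallis product and a remainder controlled by convexity.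
  set R : ℕ → ℝ := fun J => 2 * ∑ i ∈ Finset.range J,
    (gaux ((2 * i + 2) * t) - gaux ((2 * i + 1) * t)) with hR
  have hpart : ∀ J : ℕ, 2 * ∑ j ∈ Finset.range (2 * J), (-1 : ℝ) ^ j * G j
      = Real.log (Real.Wallis.W J) + Real.log (2 * J + 1) + R J := by
    intro J
    induction J with
    | zero => simp [hR, Real.Wallis.W]
    | succ J ih =>
      have hW := Real.Wallis.W_pos J
      rw [show 2 * (J + 1) = 2 * J + 1 + 1 by ring, Finset.sum_range_succ, Finset.sum_range_succ,
        mul_add, mul_add, ih, Real.Wallis.W_succ]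
      have e3 : R (J + 1) = R J + 2 * (gaux ((2 * J + 2) * t) - gaux ((2 * J + 1) * t)) := by
        simp only [hR, Finset.sum_range_succ]; ring
      have e1 : G (2 * J) = -(gaux ((2 * J + 1) * t) + Real.log (2 * J + 1) + Real.log t) := by
        simp only [hGd]
        push_cast
        rw [gaux_eq (by positivity), Real.log_mul ht.ne' (by positivity),
          mul_comm t]
        ring
      have e2 : G (2 * J + 1) = -(gaux ((2 * J + 2) * t) + Real.log (2 * J + 2) + Real.log t) := by
        simp only [hGd]
        push_cast
        rw [show (2 * (J : ℝ) + 1 + 1) = 2 * J + 2 by ring,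
          gaux_eq (by positivity), Real.log_mul ht.ne' (by positivity),
          mul_comm t]
        ring
      rw [e1, e2, e3, Real.log_mul hW.ne' (by positivity), Real.log_mul (by positivity)
        (by positivity), Real.log_div (by positivity) (by positivity),
        Real.log_div (by positivity) (by positivity)]
      push_cast
      rw [show 2 * ((J : ℝ) + 1) + 1 = 2 * J + 3 by ring]
      simp only [pow_succ, pow_mul]
      norm_num
      ring
  have hconv : ∀ m : ℝ, 1 < m → 2 * gaux (m * t) ≤ gaux ((m - 1) * t) + gaux ((m + 1) * t) := by
    intro m hm
    have := gaux_midpoint ht (x := m * t) (by nlinarith)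
    convert! this using 3 <;> ring
  have hRu : ∀ J : ℕ, R J ≤ gaux ((2 * J + 1) * t) - gaux t := by
    intro J
    induction J with
    | zero => simp [hR]
    | succ J ih =>
      have e3 : R (J + 1) = R J + 2 * (gaux ((2 * J + 2) * t) - gaux ((2 * J + 1) * t)) := by
        simp only [hR, Finset.sum_range_succ]; ring
      have h := hconv (2 * J + 2) (by have : (0:ℝ) ≤ J := by positivity
                                      linarith)
      rw [e3]
      push_cast
      rw [show 2 * ((J : ℝ) + 1) + 1 = 2 * J + 2 + 1 by ring]
      rw [show 2 * (J : ℝ) + 2 - 1 = 2 * J + 1 by ring] at h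
      linarith
  have hRl : ∀ J : ℕ, gaux (2 * (J + 1) * t) + gaux (2 * t) - 2 * gaux t ≤ R (J + 1) := by
    intro J
    induction J with
    | zero =>
      simp only [hR, Finset.sum_range_succ, Finset.sum_range_zero]
      norm_num
      linarith
    | succ J ih =>
      have e3 : R (J + 1 + 1) = R (J + 1) +
          2 * (gaux ((2 * J + 4) * t) - gaux ((2 * J + 3) * t)) := by
        simp only [hR]
        rw [Finset.sum_range_succ _ (J + 1)]
        push_cast
        rw [show 2 * ((J : ℝ) + 1) + 2 = 2 * J + 4 by ring,
          show 2 * ((J : ℝ) + 1) + 1 = 2 * J + 3 by ring]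
        ring
      have h := hconv (2 * J + 3) (by have : (0:ℝ) ≤ J := by positivity
                                      linarith)
      rw [e3]
      push_cast
      rw [show 2 * ((J : ℝ) + 1 + 1) = 2 * J + 4 by ring]
      rw [show 2 * ((J : ℝ) + 1) = 2 * J + 2 by ring] at ih
      rw [show 2 * (J : ℝ) + 3 - 1 = 2 * J + 2 by ring,
        show 2 * (J : ℝ) + 3 + 1 = 2 * J + 4 by ring] at h
      linarith
  have hW : Tendsto (fun J => Real.log (Real.Wallis.W J)) atTop (nhds (Real.log (Real.pi / 2))) :=
    Real.Wallis.tendsto_W_nhds_pi_div_two.log (by positivity)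
  have hlog : ∀ c : ℝ, 0 < c → Tendsto (fun J : ℕ => Real.log (1 - Real.exp (-((2 * J + c) * t))))
      atTop (nhds 0) := by
    intro c hc
    have h1 : Tendsto (fun J : ℕ => (2 * (J : ℝ) + c) * t) atTop atTop :=
      (tendsto_atTop_add_const_right _ _
        (tendsto_natCast_atTop_atTop.const_mul_atTop (by norm_num))).atTop_mul_const ht
    have h2 := (Real.tendsto_exp_neg_atTop_nhds_zero.comp h1).const_sub 1
    rw [sub_zero] at h2
    have := h2.log one_ne_zero
    rw [Real.log_one] at this
    exact this
  constructor
  · have hl : Tendsto (fun J : ℕ => Real.log (Real.Wallis.W (J + 1)) + (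
        (Real.log (2 * (J + 1 : ℕ) + 1) - Real.log (2 * (J + 1 : ℕ))) - Real.log t
        + Real.log (1 - Real.exp (-((2 * J + 2) * t))))
        + gaux (2 * t) - 2 * gaux t) atTop
        (nhds (Real.log (Real.pi / 2) + ((0 - Real.log t) + 0) + gaux (2 * t) - 2 * gaux t)) := by
      refine (((hW.comp (tendsto_add_atTop_nat 1)).add
        ((Tendsto.sub_const ?_ _).add (hlog 2 (by norm_num)))).add_const _).sub_const _
      have h1 : Tendsto (fun m : ℕ => Real.log (m + 1) - Real.log m) atTop (nhds 0) := by
        exact (Real.tendsto_log_nat_add_one_sub_log)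
      have h2 : Tendsto (fun J : ℕ => 2 * (J + 1)) atTop atTop :=
        tendsto_atTop_mono (fun J => by simp only [id]; omega) tendsto_id
      have := h1.comp h2
      refine this.congr fun J => ?_
      simp
    have := le_of_tendsto_of_tendsto' hl (hlim.comp (tendsto_add_atTop_nat 1)) (fun J => ?_)
    · linarith
    · simp only [Function.comp]
      rw [hpart]
      have h := hRl J
      have e := gaux_eq (show 0 < (2 * (J : ℝ) + 2) * t by positivity)
      rw [Real.log_mul (by positivity) ht.ne'] at e
      push_cast
      rw [show 2 * ((J : ℝ) + 1) = 2 * J + 2 by ring] at h ⊢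
      linarith
  · have hl : Tendsto (fun J : ℕ => Real.log (Real.Wallis.W J) +
        (Real.log (1 - Real.exp (-((2 * J + 1) * t))) - Real.log t) - gaux t) atTop
        (nhds (Real.log (Real.pi / 2) + (0 - Real.log t) - gaux t)) :=
      (hW.add ((hlog 1 one_pos).sub_const _)).sub_const _
    have := le_of_tendsto_of_tendsto' hlim hl (fun J => ?_)
    · linarith
    · rw [hpart]
      have h := hRu J
      have e := gaux_eq (show 0 < (2 * (J : ℝ) + 1) * t by positivity)
      rw [Real.log_mul (by positivity) ht.ne'] at e
      linarith

/-! ### The tilting parameter and the variance of the size -/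

/-- The tilting parameter `π / √(12 n)`: with it, a random set of parts which contains each
`k ≤ n` independently with probability `bp (tn n) k` has expected size close to `n`. -/
noncomputable def tn (n : ℕ) : ℝ := Real.pi / Real.sqrt (12 * n)

/-- The variance of the size of the random set of parts. -/
noncomputable def vn (n : ℕ) : ℝ :=
  ∑ k ∈ Finset.Icc 1 n, bp (tn n) k * (1 - bp (tn n) k) * (k : ℝ) ^ 2

/-- The standard deviation of the size of the random set of parts. -/
noncomputable def sg (n : ℕ) : ℝ := Real.sqrt (vn n)

lemma tn_pos {n : ℕ} (hn : 0 < n) : 0 < tn n := by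
  have : (0 : ℝ) < n := by exact_mod_cast hn
  unfold tn
  have := Real.pi_pos
  positivity

lemma tn_nonneg (n : ℕ) : 0 ≤ tn n := by
  unfold tn
  have := Real.pi_pos
  positivity

lemma n_mul_tn_sq {n : ℕ} (hn : 0 < n) : n * tn n ^ 2 = Real.pi ^ 2 / 12 := by
  have : (0 : ℝ) < n := by exact_mod_cast hn
  unfold tn
  rw [div_pow, Real.sq_sqrt (by positivity)]
  field_simp

lemma tendsto_tn : Tendsto tn atTop (nhds 0) := by
  unfold tn
  refine Tendsto.const_div_atTop ?_ _
  exact Real.tendsto_sqrt_atTop.comp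
    (tendsto_natCast_atTop_atTop.const_mul_atTop (by norm_num))

lemma tendsto_tn' : Tendsto tn atTop (nhdsWithin 0 (Set.Ioi 0)) := by
  refine tendsto_nhdsWithin_iff.2 ⟨tendsto_tn, ?_⟩
  filter_upwards [eventually_gt_atTop 0] with n hn using tn_pos hn

lemma bp_var_nonneg {t : ℝ} (ht : 0 ≤ t) (k : ℕ) : 0 ≤ bp t k * (1 - bp t k) := by
  have := bp_le_half ht k
  exact mul_nonneg (bp_pos t k).le (by linarith)

lemma bp_var_le {t : ℝ} (ht : 0 ≤ t) (k : ℕ) :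
    bp t k * (1 - bp t k) ≤ Real.exp (-(t * k)) := by
  have h1 := bp_le_half ht k
  have h2 := bp_pos t k
  have h3 := bp_le_exp t k
  nlinarith

lemma bp_var_ge {t : ℝ} {k : ℕ} (htk : t * k ≤ 1) (h0 : 0 ≤ t) :
    1 / 12 ≤ bp t k * (1 - bp t k) := by
  unfold bp
  set E := Real.exp (t * k) with hE
  have h1 : 1 ≤ E := Real.one_le_exp (by positivity)
  have h3 : E ≤ 3 := (Real.exp_le_exp.2 htk).trans Real.exp_one_lt_three.le
  have : 1 / (E + 1) * (1 - 1 / (E + 1)) = E / (E + 1) ^ 2 := by field_simp; ring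
  rw [this, div_le_div_iff₀ (by norm_num) (by positivity)]
  nlinarith

/-- `⌊√n⌋` is of the order of `1 / t_n`; it serves as the range of indices with `p_k(1 - p_k)`
bounded below. -/
lemma sqrt_bounds {n : ℕ} (hn : 0 < n) :
    1 / (4 * tn n) ≤ (Nat.sqrt n : ℝ) ∧ tn n * (Nat.sqrt n : ℝ) ≤ 1 := by
  have ht := tn_pos hn
  have h := n_mul_tn_sq hn
  have h1 : Nat.sqrt n * Nat.sqrt n ≤ n := Nat.sqrt_le n
  have h2 : n < (Nat.sqrt n + 1) * (Nat.sqrt n + 1) := Nat.lt_succ_sqrt n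
  have h3 : 0 < Nat.sqrt n := Nat.sqrt_pos.2 hn
  set M := Nat.sqrt n
  have h1' : (M : ℝ) * M ≤ n := by exact_mod_cast h1
  have h2' : (n : ℝ) < (M + 1) * (M + 1) := by exact_mod_cast h2
  have h3' : (1 : ℝ) ≤ M := by exact_mod_cast h3
  have hp := Real.pi_gt_three
  have hp2 := Real.pi_lt_d2
  constructor
  · have h4 : (n : ℝ) ≤ 4 * M ^ 2 := by nlinarith
    have h5 : 1 ≤ (4 * tn n * M) ^ 2 := by
      have : Real.pi ^ 2 / 12 ≤ 4 * M ^ 2 * tn n ^ 2 := by rw [← h]; gcongr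
      nlinarith
    have h6 : 1 ≤ 4 * tn n * M := by
      by_contra hlt
      push Not at hlt
      have : (4 * tn n * M) ^ 2 < 1 := by
        have : 0 ≤ 4 * tn n * M := by positivity
        nlinarith
      linarith
    rw [div_le_iff₀ (by positivity)]
    linarith
  · have h5 : (tn n * M) ^ 2 ≤ 1 := by
      have : M * M * tn n ^ 2 ≤ Real.pi ^ 2 / 12 := by rw [← h]; gcongr
      nlinarith
    have : 0 ≤ tn n * M := by positivity
    nlinarith

lemma cube_le_sum_sq (M : ℕ) : (M : ℝ) ^ 3 / 3 ≤ ∑ k ∈ Finset.Icc 1 M, (k : ℝ) ^ 2 := by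
  induction M with
  | zero => simp
  | succ M ih =>
    rw [Finset.sum_Icc_succ_top (by omega)]
    push_cast
    have : (0 : ℝ) ≤ M := by positivity
    nlinarith

lemma vn_ge {n : ℕ} (hn : 0 < n) : 1 / (2304 * tn n ^ 3) ≤ vn n := by
  have ht := tn_pos hn
  obtain ⟨h1, h2⟩ := sqrt_bounds hn
  have h3 := cube_le_sum_sq (Nat.sqrt n)
  set M := Nat.sqrt n with hM
  have h4 : ∑ k ∈ Finset.Icc 1 M, 1 / 12 * (k : ℝ) ^ 2 ≤ vn n := by
    unfold vn
    refine (Finset.sum_le_sum fun k hk => ?_).trans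
      (Finset.sum_le_sum_of_subset_of_nonneg (Finset.Icc_subset_Icc_right (Nat.sqrt_le_self n))
        fun k _ _ => mul_nonneg (bp_var_nonneg ht.le k) (by positivity))
    have hk' : (k : ℝ) ≤ M := by exact_mod_cast (Finset.mem_Icc.1 hk).2
    have : tn n * k ≤ 1 := le_trans (by gcongr) h2
    have := bp_var_ge this ht.le
    gcongr
  rw [← Finset.mul_sum] at h4
  have h5 : (1 / (4 * tn n)) ^ 3 ≤ (M : ℝ) ^ 3 := by gcongr
  have h6 : 1 / (2304 * tn n ^ 3) = (1 / (4 * tn n)) ^ 3 / 36 := by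
    field_simp; norm_num
  rw [h6]
  linarith

lemma vn_le {n : ℕ} (hn : 0 < n) : vn n ≤ 16 / tn n ^ 3 := by
  have ht := tn_pos hn
  have h := sum_pow_mul_exp_le ht 2 n
  have h2 : vn n ≤ ∑ k ∈ Finset.Icc 1 n, (k : ℝ) ^ 2 * Real.exp (-(tn n * k)) := by
    unfold vn
    refine Finset.sum_le_sum fun k _ => ?_
    rw [mul_comm]
    exact mul_le_mul_of_nonneg_left (bp_var_le ht.le k) (by positivity)
  refine h2.trans (h.trans (le_of_eq ?_))
  simp only [Nat.factorial]
  push_cast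
  ring

lemma vn_pos {n : ℕ} (hn : 0 < n) : 0 < vn n := by
  have := tn_pos hn
  exact lt_of_lt_of_le (by positivity) (vn_ge hn)

lemma sg_pos {n : ℕ} (hn : 0 < n) : 0 < sg n := Real.sqrt_pos.2 (vn_pos hn)

lemma sg_sq {n : ℕ} (hn : 0 < n) : sg n ^ 2 = vn n := Real.sq_sqrt (vn_pos hn).le

lemma rpow_three_half_sq {t : ℝ} (ht : 0 < t) : (t ^ (3 / 2 : ℝ)) ^ 2 = t ^ 3 := by
  rw [← Real.rpow_natCast, ← Real.rpow_mul ht.le, ← Real.rpow_natCast]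
  norm_num

lemma inv_sg_le {n : ℕ} (hn : 0 < n) : 1 / sg n ≤ 48 * tn n ^ (3 / 2 : ℝ) := by
  have ht := tn_pos hn
  have hs := sg_pos hn
  have h := vn_ge hn
  rw [← sg_sq hn, div_le_iff₀ (by positivity), ← rpow_three_half_sq ht] at h
  set r := tn n ^ (3 / 2 : ℝ) with hr
  have hr0 : 0 < r := by positivity
  rw [div_le_iff₀ hs]
  by_contra hlt
  push Not at hlt
  have : (48 * r * sg n) ^ 2 < 1 := by
    have : 0 < 48 * r * sg n := by positivity
    nlinarith
  nlinarith

lemma tendsto_rpow_tn {a : ℝ} (ha : 0 < a) : Tendsto (fun n => tn n ^ a) atTop (nhds 0) := by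
  have := tendsto_tn.rpow_const (p := a) (Or.inr ha.le)
  rwa [Real.zero_rpow ha.ne'] at this

lemma tendsto_mean_size :
    Tendsto (fun n : ℕ => (∑ k ∈ Finset.Icc 1 n, (k : ℝ) * bp (tn n) k - n) / sg n)
      atTop (nhds 0) := by
  obtain ⟨C, hC⟩ := mean_size_aux
  have hlim : Tendsto (fun n => 48 * C * tn n ^ (1 / 4 : ℝ) + 48 * 1500 * tn n ^ (3 / 2 : ℝ))
      atTop (nhds (48 * C * 0 + 48 * 1500 * 0)) :=
    ((tendsto_rpow_tn (by norm_num)).const_mul _).add ((tendsto_rpow_tn (by norm_num)).const_mul _)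
  simp only [mul_zero, add_zero] at hlim
  refine squeeze_zero_norm' ?_ hlim
  filter_upwards [eventually_gt_atTop 0] with n hn
  have ht := tn_pos hn
  have hn' : (0 : ℝ) < n := by exact_mod_cast hn
  obtain ⟨hs, h1⟩ := hC (tn n) ht
  have h2 := tsum_sub_sum_le ht (fun k => (k : ℝ)) (fun k => by positivity) (by simp) 3 n hn
    (fun k hk => by
      have : (n : ℝ) < k := by exact_mod_cast hk
      rw [le_div_iff₀ (by positivity), pow_succ' _ 2]
      gcongr) hs
  set A := ∑' k : ℕ, (k : ℝ) * bp (tn n) k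
  set B := ∑ k ∈ Finset.Icc 1 n, (k : ℝ) * bp (tn n) k
  have hnt := n_mul_tn_sq hn
  have h3 : |A - n| ≤ C * tn n ^ (3 / 4 : ℝ) / tn n ^ 2 := by
    rw [le_div_iff₀ (by positivity), ← abs_of_pos (show 0 < tn n ^ 2 by positivity), ← abs_mul]
    rw [← hnt] at h1
    convert! h1 using 2; ring
  have h4 : ((3 : ℕ).factorial : ℝ) * (2 / tn n) ^ (3 + 1) / n ^ 2 ≤ 1500 := by
    have e : ((3 : ℕ).factorial : ℝ) * (2 / tn n) ^ (3 + 1) / n ^ 2 = 96 / (n * tn n ^ 2) ^ 2 := by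
      simp only [Nat.factorial]; push_cast; field_simp; norm_num
    rw [e, hnt, div_le_iff₀ (by have := Real.pi_pos; positivity)]
    have hp := Real.pi_gt_three
    have : (3 : ℝ) ^ 4 ≤ Real.pi ^ 4 := by gcongr
    nlinarith
  have h5 : |B - n| ≤ C * tn n ^ (3 / 4 : ℝ) / tn n ^ 2 + 1500 := by
    have : B - n = (A - n) - (A - B) := by ring
    rw [this]
    exact (abs_sub _ _).trans (add_le_add h3 (h2.trans h4))
  rw [Real.norm_eq_abs, abs_div, abs_of_pos (sg_pos hn), div_eq_mul_one_div]
  have h6 := mul_le_mul h5 (inv_sg_le hn) (by have := sg_pos hn; positivity)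
    ((abs_nonneg _).trans h5)
  refine h6.trans (le_of_eq ?_)
  have e1 : tn n ^ (3 / 4 : ℝ) * tn n ^ (3 / 2 : ℝ) = tn n ^ (1 / 4 : ℝ) * tn n ^ 2 := by
    rw [← Real.rpow_natCast, ← Real.rpow_add ht, ← Real.rpow_add ht]; norm_num
  rw [add_mul, div_mul_eq_mul_div, show C * tn n ^ (3 / 4 : ℝ) * (48 * tn n ^ (3 / 2 : ℝ))
    = 48 * C * (tn n ^ (3 / 4 : ℝ) * tn n ^ (3 / 2 : ℝ)) by ring, e1]
  field_simp

lemma log_sqrt_eq {n : ℕ} (hn : 0 < n) :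
    Real.log (Real.sqrt (3 * n)) = Real.log (Real.pi / 2) - Real.log (tn n) := by
  have hp := Real.pi_pos
  have hn' : (0 : ℝ) < n := by exact_mod_cast hn
  rw [← Real.log_div (by positivity) (tn_pos hn).ne']
  congr 1
  unfold tn
  have e : Real.sqrt (12 * n) = 2 * Real.sqrt (3 * n) := by
    rw [show (12 : ℝ) * n = 2 ^ 2 * (3 * n) by ring, Real.sqrt_mul (by norm_num) (3 * (n : ℝ)),
      Real.sqrt_sq (by norm_num)]
  rw [e]
  field_simp

lemma tendsto_mean_recip :
    Tendsto (fun n : ℕ => 2 * ∑ k ∈ Finset.Icc 1 n, (1 / (k : ℝ)) * bp (tn n) k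
      - Real.log (Real.sqrt (3 * n))) atTop (nhds 0) := by
  have hg := tendsto_gaux.comp tendsto_tn'
  have hg2 : Tendsto (fun n => gaux (2 * tn n)) atTop (nhds 0) := by
    refine tendsto_gaux.comp (tendsto_nhdsWithin_iff.2 ⟨?_, ?_⟩)
    · simpa using tendsto_tn.const_mul 2
    · filter_upwards [eventually_gt_atTop 0] with n hn
      have := tn_pos hn
      simp only [Set.mem_Ioi]; positivity
  have hE : Tendsto (fun n => 16 * tn n ^ 2) atTop (nhds 0) := by
    simpa using (tendsto_tn.pow 2).const_mul 16
  have hl : Tendsto (fun n => gaux (2 * tn n) - 2 * gaux (tn n) - 16 * tn n ^ 2) atTop (nhds 0) := by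
    simpa using (hg2.sub (hg.const_mul 2)).sub hE
  have hu : Tendsto (fun n => - gaux (tn n) + 16 * tn n ^ 2) atTop (nhds 0) := by
    simpa using hg.neg.add hE
  have key : ∀ᶠ n : ℕ in atTop, gaux (2 * tn n) - 2 * gaux (tn n) - 16 * tn n ^ 2 ≤
      2 * ∑ k ∈ Finset.Icc 1 n, (1 / (k : ℝ)) * bp (tn n) k - Real.log (Real.sqrt (3 * n)) ∧
      2 * ∑ k ∈ Finset.Icc 1 n, (1 / (k : ℝ)) * bp (tn n) k - Real.log (Real.sqrt (3 * n)) ≤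
        - gaux (tn n) + 16 * tn n ^ 2 := by
    filter_upwards [eventually_gt_atTop 0] with n hn
    have ht := tn_pos hn
    have hn' : (0 : ℝ) < n := by exact_mod_cast hn
    obtain ⟨hs, h1, h2⟩ := mean_recip_aux ht
    have h3 := tsum_sub_sum_le ht (fun k => 1 / (k : ℝ)) (fun k => by positivity) (by simp) 1 n hn
      (fun k hk => by
        have : (n : ℝ) < k := by exact_mod_cast hk
        have : (0 : ℝ) < k := hn'.trans this
        rw [div_le_div_iff₀ (by positivity) (by positivity), one_mul, pow_one, ← sq]
        gcongr) hs
    have hnt := n_mul_tn_sq hn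
    have h4 : ((1 : ℕ).factorial : ℝ) * (2 / tn n) ^ (1 + 1) / n ^ 2 ≤ 8 * tn n ^ 2 := by
      have e : ((1 : ℕ).factorial : ℝ) * (2 / tn n) ^ (1 + 1) / n ^ 2
          = 4 / (n * tn n ^ 2) ^ 2 * tn n ^ 2 := by
        simp only [Nat.factorial]; push_cast; field_simp; norm_num
      rw [e, hnt]
      gcongr
      rw [div_le_iff₀ (by have := Real.pi_pos; positivity)]
      have hp := Real.pi_gt_three
      have : (3 : ℝ) ^ 4 ≤ Real.pi ^ 4 := by gcongr
      nlinarith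
    have h5 := abs_le.1 (h3.trans h4)
    rw [log_sqrt_eq hn]
    constructor <;> linarith [h5.1, h5.2]
  exact tendsto_of_tendsto_of_tendsto_of_le_of_le' hl hu (key.mono fun n h => h.1)
    (key.mono fun n h => h.2)

/-! ### The centred characteristic function of a Bernoulli variable -/

/-- The characteristic function at `x` of `B - p`, where `B` is Bernoulli with parameter `p`. -/
noncomputable def cf (p x : ℝ) : ℂ :=
  Complex.exp (-(Complex.I * (p * x : ℝ))) * (1 - p + p * Complex.exp (Complex.I * x))

lemma norm_exp_I_mul (x : ℝ) : ‖Complex.exp (Complex.I * x)‖ = 1 := by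
  rw [mul_comm]; exact Complex.norm_exp_ofReal_mul_I x

lemma norm_exp_neg_I_mul (x : ℝ) : ‖Complex.exp (-(Complex.I * x))‖ = 1 := by
  have := norm_exp_I_mul (-x)
  rwa [Complex.ofReal_neg, mul_neg] at this

lemma norm_one_sub_add_le {p : ℝ} (h0 : 0 ≤ p) (h1 : p ≤ 1) (x : ℝ) :
    ‖(1 - p + p * Complex.exp (Complex.I * x) : ℂ)‖ ≤ 1 := by
  refine (norm_add_le _ _).trans ?_
  rw [norm_mul, norm_exp_I_mul, mul_one]
  have e1 : ‖(1 - p : ℂ)‖ = 1 - p := by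
    rw [← Complex.ofReal_one, ← Complex.ofReal_sub, Complex.norm_real, Real.norm_eq_abs,
      abs_of_nonneg (by linarith)]
  rw [e1, Complex.norm_real, Real.norm_eq_abs, abs_of_nonneg h0]
  linarith

lemma norm_cf_eq (p x : ℝ) : ‖cf p x‖ = ‖(1 - p + p * Complex.exp (Complex.I * x) : ℂ)‖ := by
  rw [cf, norm_mul, norm_exp_neg_I_mul, one_mul]

lemma norm_cf_le {p : ℝ} (h0 : 0 ≤ p) (h1 : p ≤ 1) (x : ℝ) : ‖cf p x‖ ≤ 1 := by
  rw [norm_cf_eq]; exact norm_one_sub_add_le h0 h1 x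

/-- The error in treating the two arguments as independent is a covariance. -/
lemma norm_cf_add_sub_le {p : ℝ} (h0 : 0 ≤ p) (h1 : p ≤ 1) (y z : ℝ) :
    ‖cf p (y + z) - cf p y * cf p z‖ ≤ p * (1 - p) * (|y| * |z|) := by
  have e : cf p (y + z) - cf p y * cf p z = Complex.exp (-(Complex.I * (p * (y + z) : ℝ))) *
      ((p * (1 - p) : ℝ) * ((Complex.exp (Complex.I * y) - 1) * (Complex.exp (Complex.I * z) - 1))) := by
    unfold cf
    have a1 : Complex.exp (-(Complex.I * (p * y : ℝ))) * Complex.exp (-(Complex.I * (p * z : ℝ)))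
        = Complex.exp (-(Complex.I * (p * (y + z) : ℝ))) := by
      rw [← Complex.exp_add]; congr 1; push_cast; ring
    have a2 : Complex.exp (Complex.I * (y + z : ℝ)) =
        Complex.exp (Complex.I * y) * Complex.exp (Complex.I * z) := by
      rw [← Complex.exp_add]; congr 1; push_cast; ring
    rw [a2, ← a1]
    push_cast
    ring
  rw [e, norm_mul, norm_exp_neg_I_mul, one_mul, norm_mul, norm_mul, Complex.norm_real,
    Real.norm_eq_abs, abs_of_nonneg (mul_nonneg h0 (by linarith))]
  have b1 := Real.norm_exp_I_mul_ofReal_sub_one_le (x := y)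
  have b2 := Real.norm_exp_I_mul_ofReal_sub_one_le (x := z)
  rw [Real.norm_eq_abs] at b1 b2
  have : 0 ≤ p * (1 - p) := mul_nonneg h0 (by linarith)
  gcongr

lemma norm_exp_sub_two_le (u : ℝ) :
    ‖Complex.exp (Complex.I * u) - 1 - Complex.I * u‖ ≤ 3 * u ^ 2 := by
  have hn : ‖Complex.I * (u : ℂ)‖ = |u| := by simp
  rcases le_total |u| 1 with h | h
  · have := Complex.exp_bound (x := Complex.I * u) (by rw [hn]; exact h) (n := 2) (by norm_num)
    simp only [Finset.sum_range_succ, Finset.sum_range_zero, hn] at this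
    norm_num at this
    rw [← sub_sub] at this
    refine this.trans ?_
    nlinarith [sq_nonneg u]
  · refine (norm_sub_le _ _).trans ?_
    have h2 := norm_sub_le (Complex.exp (Complex.I * u)) 1
    rw [norm_exp_I_mul, norm_one] at h2
    rw [hn]
    have : |u| ^ 2 = u ^ 2 := sq_abs u
    nlinarith

lemma norm_exp_sub_three_le (u : ℝ) :
    ‖Complex.exp (Complex.I * u) - (1 + Complex.I * u - (u : ℂ) ^ 2 / 2)‖ ≤ 4 * |u| ^ 3 := by
  have hn : ‖Complex.I * (u : ℂ)‖ = |u| := by simp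
  have e : (1 + Complex.I * u - (u : ℂ) ^ 2 / 2) =
      ∑ m ∈ Finset.range 3, (Complex.I * u) ^ m / m.factorial := by
    simp only [Finset.sum_range_succ, Finset.sum_range_zero, mul_pow, Complex.I_sq]
    norm_num
    ring
  rcases le_total |u| 1 with h | h
  · have := Complex.exp_bound (x := Complex.I * u) (by rw [hn]; exact h) (n := 3) (by norm_num)
    rw [e]
    refine this.trans ?_
    rw [hn]
    norm_num [Nat.factorial]
    have : 0 ≤ |u| ^ 3 := by positivity
    linarith
  · refine (norm_sub_le _ _).trans ?_
    rw [norm_exp_I_mul]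
    have h2 : ‖1 + Complex.I * u - (u : ℂ) ^ 2 / 2‖ ≤ 1 + |u| + |u| ^ 2 / 2 := by
      refine (norm_sub_le _ _).trans (add_le_add ((norm_add_le _ _).trans ?_) ?_)
      · rw [hn, norm_one]
      · simp
    have h3 : |u| ≤ |u| ^ 3 := by nlinarith [sq_nonneg (|u|)]
    have h4 : |u| ^ 2 ≤ |u| ^ 3 := pow_le_pow_right₀ h (by norm_num)
    linarith

lemma hasDerivAt_cf (x y : ℝ) : HasDerivAt (fun q : ℝ => cf q y)
    (Complex.exp (-(Complex.I * (x * y : ℝ))) *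
      ((Complex.exp (Complex.I * y) - 1 - Complex.I * y)
        - Complex.I * y * (x * (Complex.exp (Complex.I * y) - 1)))) x := by
  have b1 : HasDerivAt (fun q : ℂ => q) 1 (x : ℂ) := hasDerivAt_id _
  have b2 : HasDerivAt (fun q : ℂ => q * (-Complex.I * y)) (1 * (-Complex.I * y)) (x : ℂ) :=
    b1.mul_const _
  have b3 : HasDerivAt (fun q : ℂ => 1 - q + q * Complex.exp (Complex.I * y))
      (-1 + 1 * Complex.exp (Complex.I * y)) (x : ℂ) :=
    (b1.const_sub 1).add (b1.mul_const _)
  have b4 := (b2.cexp.mul b3).comp_ofReal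
  have e : (fun q : ℝ => cf q y) = fun q : ℝ => Complex.exp ((q : ℂ) * (-Complex.I * y)) *
      (1 - q + q * Complex.exp (Complex.I * y)) := by
    funext q
    unfold cf
    congr 2
    push_cast
    ring
  rw [e]
  refine HasDerivAt.congr_deriv b4 ?_
  rw [show (-(Complex.I * (x * y : ℝ)) : ℂ) = (x : ℂ) * (-Complex.I * y) by push_cast; ring]
  ring

/-- A Bernoulli variable with `p` near `1/2` is compared with a fair one, for which `cf` is a
cosine; the factor `y²` comes from centring. -/
lemma norm_cf_sub_cos_le {p : ℝ} (h0 : 0 ≤ p) (h1 : p ≤ 1) (y : ℝ) :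
    ‖cf p y - Real.cos (y / 2)‖ ≤ 4 * y ^ 2 * |p - 1 / 2| := by
  have hcos : cf (1 / 2) y = Real.cos (y / 2) := by
    rw [cf, Complex.ofReal_cos, Complex.cos]
    have a1 : Complex.exp (-(Complex.I * (1 / 2 * y : ℝ))) * Complex.exp (Complex.I * y)
        = Complex.exp (((y / 2 : ℝ) : ℂ) * Complex.I) := by
      rw [← Complex.exp_add]; congr 1; push_cast; ring
    have a2 : Complex.exp (-(Complex.I * (1 / 2 * y : ℝ)))
        = Complex.exp (-((y / 2 : ℝ) : ℂ) * Complex.I) := by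
      congr 1; push_cast; ring
    rw [← a1, ← a2]
    push_cast
    ring
  rw [← hcos, ← Real.norm_eq_abs]
  have hd : ∀ x ∈ Set.Icc (0 : ℝ) 1, HasDerivWithinAt (fun q : ℝ => cf q y)
      (Complex.exp (-(Complex.I * (x * y : ℝ))) *
        ((Complex.exp (Complex.I * y) - 1 - Complex.I * y)
          - Complex.I * y * (x * (Complex.exp (Complex.I * y) - 1)))) (Set.Icc 0 1) x := by
    intro x _
    exact (hasDerivAt_cf x y).hasDerivWithinAt
  have hbound : ∀ x ∈ Set.Icc (0 : ℝ) 1, ‖Complex.exp (-(Complex.I * (x * y : ℝ))) *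
      ((Complex.exp (Complex.I * y) - 1 - Complex.I * y)
        - Complex.I * y * (x * (Complex.exp (Complex.I * y) - 1)))‖ ≤ 4 * y ^ 2 := by
    intro x hx
    rw [norm_mul, norm_exp_neg_I_mul, one_mul]
    refine (norm_sub_le _ _).trans ?_
    have c1 := norm_exp_sub_two_le y
    have c2 := Real.norm_exp_I_mul_ofReal_sub_one_le (x := y)
    have c3 : ‖Complex.I * y * (x * (Complex.exp (Complex.I * y) - 1))‖ ≤ |y| * (1 * |y|) := by
      rw [norm_mul, norm_mul, norm_mul, Complex.norm_I, one_mul, Complex.norm_real, Complex.norm_real,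
        Real.norm_eq_abs, Real.norm_eq_abs, abs_of_nonneg hx.1]
      rw [Real.norm_eq_abs] at c2
      have := hx.2
      gcongr
    have : |y| * |y| = y ^ 2 := by rw [← sq, sq_abs]
    linarith
  have hhalf : (1 / 2 : ℝ) ∈ Set.Icc (0 : ℝ) 1 := ⟨by norm_num, by norm_num⟩
  exact Convex.norm_image_sub_le_of_norm_hasDerivWithin_le (f := fun q : ℝ => cf q y) hd hbound
    (convex_Icc 0 1) hhalf ⟨h0, h1⟩

/-- Comparison with the Gaussian of the same variance. Every error term carries the factor
`p (1 - p)`, which is needed for the errors to sum to something small. -/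
lemma norm_cf_sub_gauss_le {p : ℝ} (h0 : 0 ≤ p) (h1 : p ≤ 1) (z : ℝ) :
    ‖cf p z - Real.exp (-(p * (1 - p) * z ^ 2 / 2))‖
      ≤ p * (1 - p) * (4 * |z| ^ 3) + p * (1 - p) * z ^ 4 := by
  set q := p * (1 - p) with hq
  have hq0 : 0 ≤ q := mul_nonneg h0 (by linarith)
  have hq1 : q ≤ 1 := by rw [hq]; nlinarith
  have e : cf p z = (1 - p) * Complex.exp (Complex.I * (-(p * z) : ℝ)) +
      p * Complex.exp (Complex.I * ((1 - p) * z : ℝ)) := by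
    have a1 : Complex.exp (-(Complex.I * (p * z : ℝ))) * Complex.exp (Complex.I * z)
        = Complex.exp (Complex.I * ((1 - p) * z : ℝ)) := by
      rw [← Complex.exp_add]; congr 1; push_cast; ring
    have a2 : Complex.exp (-(Complex.I * (p * z : ℝ)))
        = Complex.exp (Complex.I * (-(p * z) : ℝ)) := by
      congr 1; push_cast; ring
    rw [← a1, ← a2, cf]; ring
  have t1 := norm_exp_sub_three_le (-(p * z))
  have t2 := norm_exp_sub_three_le ((1 - p) * z)
  have t3 : |Real.exp (-(q * z ^ 2 / 2)) - (1 - q * z ^ 2 / 2)| ≤ q * z ^ 4 := by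
    set v := q * z ^ 2 / 2 with hv
    have hv0 : 0 ≤ v := by positivity
    have l1 := Real.add_one_le_exp (-v)
    have l2 : Real.exp (-v) ≤ 1 - v + v ^ 2 := by
      have l3 := Real.add_one_le_exp v
      rw [Real.exp_neg, inv_le_comm₀ (Real.exp_pos v) (by nlinarith)]
      refine le_trans ?_ l3
      rw [inv_le_iff_one_le_mul₀ (by nlinarith)]
      nlinarith [pow_nonneg hv0 3]
    rw [abs_of_nonneg (by linarith)]
    have : v ^ 2 ≤ q * z ^ 4 := by
      have : v ^ 2 = q * q * z ^ 4 / 4 := by rw [hv]; ring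
      rw [this]
      have : q * q ≤ q := by nlinarith
      have : q * q * z ^ 4 ≤ q * z ^ 4 := by gcongr
      have : 0 ≤ q * z ^ 4 := by positivity
      linarith
    linarith
  set D1 := Complex.exp (Complex.I * (-(p * z) : ℝ)) -
    (1 + Complex.I * (-(p * z) : ℝ) - ((-(p * z) : ℝ) : ℂ) ^ 2 / 2) with hD1
  set D2 := Complex.exp (Complex.I * ((1 - p) * z : ℝ)) -
    (1 + Complex.I * ((1 - p) * z : ℝ) - (((1 - p) * z : ℝ) : ℂ) ^ 2 / 2) with hD2
  set D3 := Real.exp (-(q * z ^ 2 / 2)) - (1 - q * z ^ 2 / 2) with hD3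
  have e2 : cf p z - Real.exp (-(q * z ^ 2 / 2)) =
      ((1 - p : ℝ) : ℂ) * D1 + p * D2 - (D3 : ℂ) := by
    rw [e, hD1, hD2, hD3, hq]
    push_cast
    ring
  rw [e2]
  refine (norm_sub_le _ _).trans (add_le_add ((norm_add_le _ _).trans ?_) ?_)
  · rw [norm_mul, norm_mul, Complex.norm_real, Complex.norm_real, Real.norm_eq_abs,
      Real.norm_eq_abs, abs_of_nonneg h0, abs_of_nonneg (show 0 ≤ 1 - p by linarith)]
    have m1 := mul_le_mul_of_nonneg_left t1 (show 0 ≤ 1 - p by linarith)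
    have m2 := mul_le_mul_of_nonneg_left t2 h0
    refine (add_le_add m1 m2).trans ?_
    rw [abs_neg, abs_mul, abs_mul, abs_of_nonneg h0, abs_of_nonneg (show 0 ≤ 1 - p by linarith),
      hq]
    have hz : 0 ≤ |z| ^ 3 := by positivity
    have : p ^ 2 + (1 - p) ^ 2 ≤ 1 := by nlinarith
    calc _ = (p ^ 2 + (1 - p) ^ 2) * (p * (1 - p) * (4 * |z| ^ 3)) := by ring
      _ ≤ 1 * (p * (1 - p) * (4 * |z| ^ 3)) := by
        have : 0 ≤ p * (1 - p) := hq0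
        gcongr
      _ = _ := one_mul _
  · rw [Complex.norm_real]; exact t3

/-- The telescoping bound for a difference of products of factors in the unit disc. -/
lemma norm_prod_sub_prod_le {ι : Type*} (s : Finset ι) (a b : ι → ℂ)
    (ha : ∀ i ∈ s, ‖a i‖ ≤ 1) (hb : ∀ i ∈ s, ‖b i‖ ≤ 1) :
    ‖∏ i ∈ s, a i - ∏ i ∈ s, b i‖ ≤ ∑ i ∈ s, ‖a i - b i‖ := by
  classical
  induction s using Finset.induction_on with
  | empty => simp
  | insert i s hi ih =>
    rw [Finset.prod_insert hi, Finset.prod_insert hi, Finset.sum_insert hi]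
    have ih := ih (fun j hj => ha j (Finset.mem_insert_of_mem hj))
      (fun j hj => hb j (Finset.mem_insert_of_mem hj))
    have hA : ‖∏ j ∈ s, a j‖ ≤ 1 := by
      rw [norm_prod]
      exact Finset.prod_le_one (fun _ _ => norm_nonneg _)
        (fun j hj => ha j (Finset.mem_insert_of_mem hj))
    have hbi := hb i (Finset.mem_insert_self i s)
    have e : a i * ∏ j ∈ s, a j - b i * ∏ j ∈ s, b j =
        (a i - b i) * ∏ j ∈ s, a j + b i * (∏ j ∈ s, a j - ∏ j ∈ s, b j) := by ring
    rw [e]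
    refine (norm_add_le _ _).trans (add_le_add ?_ ?_)
    · rw [norm_mul]; exact mul_le_of_le_one_right (norm_nonneg _) hA
    · rw [norm_mul]; exact (mul_le_of_le_one_left (norm_nonneg _) hbi).trans ih

/-! ### Pointwise convergence of the joint characteristic function -/

lemma abs_bp_sub_half_le {t : ℝ} (ht : 0 < t) {k : ℕ} :
    |bp t k - 1 / 2| ≤ t ^ (1 / 2 : ℝ) * (k : ℝ) ^ (1 / 2 : ℝ) := by
  have h1 := bp_le_half ht.le k
  have h2 := bp_pos t k
  rw [abs_of_nonpos (by linarith), ← Real.mul_rpow ht.le (by positivity)]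
  have hx : 0 ≤ t * (k : ℝ) := by positivity
  have h3 : 1 / 2 - bp t k ≤ t * k := by
    unfold bp
    set x := t * (k : ℝ)
    have hE := Real.exp_pos x
    have h4 := Real.add_one_le_exp (-x)
    have h5 : Real.exp (-x) * Real.exp x = 1 := by rw [← Real.exp_add]; simp
    rw [div_sub_div _ _ (by norm_num) (by positivity), div_le_iff₀ (by positivity)]
    nlinarith
  rcases le_total 1 (t * (k : ℝ)) with h | h
  · have := Real.one_le_rpow h (z := 1 / 2) (by norm_num)
    linarith
  · rcases hx.eq_or_lt with h0 | h0
    · rw [← h0] at h3 ⊢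
      rw [Real.zero_rpow (by norm_num)]
      linarith
    · have := Real.rpow_le_rpow_of_exponent_ge h0 h (show (1 / 2 : ℝ) ≤ 1 by norm_num)
      rw [Real.rpow_one] at this
      linarith

/-- The joint characteristic function, at `(s, τ)`, of twice the centred sum of reciprocals and of
the normalised centred size of the random set of parts. -/
noncomputable def psi (n : ℕ) (s τ : ℝ) : ℂ :=
  ∏ k ∈ Finset.Icc 1 n, cf (bp (tn n) k) (2 * s / k + k * τ / sg n)

lemma bp_le_one {t : ℝ} (ht : 0 ≤ t) (k : ℕ) : bp t k ≤ 1 := by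
  linarith [bp_le_half ht k]

/-- The comparison of a single factor of `psi` with its limit form. -/
lemma factor_le {p y z : ℝ} (h0 : 0 ≤ p) (h1 : p ≤ 1) :
    ‖cf p (y + z) - (Real.cos (y / 2) * Real.exp (-(p * (1 - p) * z ^ 2 / 2)) : ℝ)‖ ≤
      p * (1 - p) * (|y| * |z|) + 4 * y ^ 2 * |p - 1 / 2| +
      (p * (1 - p) * (4 * |z| ^ 3) + p * (1 - p) * z ^ 4) := by
  have e : cf p (y + z) - (Real.cos (y / 2) * Real.exp (-(p * (1 - p) * z ^ 2 / 2)) : ℝ)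
      = (cf p (y + z) - cf p y * cf p z) + (cf p y - Real.cos (y / 2)) * cf p z +
        Real.cos (y / 2) * (cf p z - Real.exp (-(p * (1 - p) * z ^ 2 / 2))) := by
    push_cast; ring
  rw [e]
  refine (norm_add_le _ _).trans (add_le_add ((norm_add_le _ _).trans (add_le_add
    (norm_cf_add_sub_le h0 h1 y z) ?_)) ?_)
  · rw [norm_mul]
    exact (mul_le_of_le_one_right (norm_nonneg _) (norm_cf_le h0 h1 z)).trans
      (norm_cf_sub_cos_le h0 h1 y)
  · rw [norm_mul]
    refine (mul_le_of_le_one_left (norm_nonneg _) ?_).trans (norm_cf_sub_gauss_le h0 h1 z)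
    rw [Complex.norm_real]; exact Real.abs_cos_le_one _

/-- Quantitative form of the pointwise limit. The four error terms come from the covariance of the
two arguments, from `p_k ≠ 1/2`, and from the third and fourth order terms of the Gaussian
approximation. -/
lemma psi_sub_le (s τ : ℝ) : ∃ C : ℝ, ∀ n : ℕ, 0 < n →
    ‖psi n s τ - (∏ k ∈ Finset.Icc 1 n, (Real.cos (s / k) : ℂ)) * Real.exp (-(τ ^ 2 / 2))‖
      ≤ C * tn n ^ (1 / 2 : ℝ) + C * tn n := by
  set K := ∑' k : ℕ, 1 / (k : ℝ) ^ (3 / 2 : ℝ) with hK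
  have hsum : Summable (fun k : ℕ => 1 / (k : ℝ) ^ (3 / 2 : ℝ)) :=
    Real.summable_one_div_nat_rpow.2 (by norm_num)
  have hK0 : 0 ≤ K := tsum_nonneg fun k => by positivity
  set A := 2 * |s| * |τ| * 48 * 2 + 16 * s ^ 2 * K + 4 * |τ| ^ 3 * 48 ^ 3 * (6 * 16) with hA
  set B := τ ^ 4 * 48 ^ 4 * (24 * 32) with hB
  have hA0 : 0 ≤ A := by positivity
  have hB0 : 0 ≤ B := by positivity
  refine ⟨A + B, fun n hn => ?_⟩
  have ht := tn_pos hn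
  have hs := sg_pos hn
  set t := tn n with htd
  suffices h : ‖psi n s τ - (∏ k ∈ Finset.Icc 1 n, (Real.cos (s / k) : ℂ)) *
      Real.exp (-(τ ^ 2 / 2))‖ ≤ A * t ^ (1 / 2 : ℝ) + B * t by
    refine h.trans (add_le_add ?_ ?_)
    · have : 0 ≤ t ^ (1 / 2 : ℝ) := by positivity
      gcongr; linarith
    · gcongr; linarith
  have hprod : (∏ k ∈ Finset.Icc 1 n, (Real.cos (s / k) : ℂ)) * Real.exp (-(τ ^ 2 / 2)) =
      ∏ k ∈ Finset.Icc 1 n, ((Real.cos (2 * s / k / 2) *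
        Real.exp (-(bp t k * (1 - bp t k) * (k * τ / sg n) ^ 2 / 2)) : ℝ) : ℂ) := by
    simp only [Complex.ofReal_mul]
    rw [Finset.prod_mul_distrib]
    congr 1
    · refine Finset.prod_congr rfl fun k _ => ?_
      congr 2; ring
    · rw [← Complex.ofReal_prod, ← Real.exp_sum]
      congr 2
      rw [Finset.sum_neg_distrib]
      congr 1
      have hv := sg_sq hn
      rw [vn, ← htd] at hv
      have : ∀ k : ℕ, bp t k * (1 - bp t k) * (k * τ / sg n) ^ 2 / 2
          = bp t k * (1 - bp t k) * (k : ℝ) ^ 2 * (τ ^ 2 / 2 / sg n ^ 2) := fun k => by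
        field_simp
      simp_rw [this]
      rw [← Finset.sum_mul, ← hv]
      field_simp
  rw [hprod, psi]
  refine (norm_prod_sub_prod_le _ _ _ (fun k _ => norm_cf_le (bp_pos _ _).le (bp_le_one ht.le k) _)
    (fun k _ => ?_)).trans ?_
  · rw [Complex.norm_real, Real.norm_eq_abs, abs_mul, Real.abs_exp]
    refine mul_le_one₀ (Real.abs_cos_le_one _) (Real.exp_pos _).le (Real.exp_le_one_iff.2 ?_)
    have := bp_var_nonneg ht.le k
    rw [neg_nonpos]
    positivity
  set r := 1 / sg n with hr
  have hr0 : 0 < r := by positivity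
  have hrle : r ≤ 48 * t ^ (3 / 2 : ℝ) := inv_sg_le hn
  have hterm : ∀ k ∈ Finset.Icc 1 n,
      ‖cf (bp t k) (2 * s / k + k * τ / sg n) - ((Real.cos (2 * s / k / 2) *
        Real.exp (-(bp t k * (1 - bp t k) * (k * τ / sg n) ^ 2 / 2)) : ℝ) : ℂ)‖ ≤
      2 * |s| * |τ| * r * ((k : ℝ) ^ 0 * Real.exp (-(t * k))) +
      16 * s ^ 2 * t ^ (1 / 2 : ℝ) * (1 / (k : ℝ) ^ (3 / 2 : ℝ)) +
      (4 * |τ| ^ 3 * r ^ 3 * ((k : ℝ) ^ 3 * Real.exp (-(t * k))) +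
        τ ^ 4 * r ^ 4 * ((k : ℝ) ^ 4 * Real.exp (-(t * k)))) := by
    intro k hk
    have hk0 : (0 : ℝ) < k := by exact_mod_cast (Finset.mem_Icc.1 hk).1
    refine (factor_le (bp_pos _ _).le (bp_le_one ht.le k)).trans ?_
    have hq := bp_var_le ht.le k
    have hq0 := bp_var_nonneg ht.le k
    have ez : k * τ / sg n = k * τ * r := by rw [hr]; ring
    have ez' : |(k : ℝ) * τ * r| = k * |τ| * r := by
      rw [abs_mul, abs_mul, abs_of_pos hk0, abs_of_pos hr0]
    have ey : |2 * s / k| = 2 * |s| / k := by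
      rw [abs_div, abs_mul, abs_of_pos hk0, abs_two]
    rw [ez, ez', ey]
    refine add_le_add (add_le_add ?_ ?_) (add_le_add ?_ ?_)
    · calc _ ≤ Real.exp (-(t * k)) * (2 * |s| / k * (k * |τ| * r)) := by gcongr
        _ = _ := by field_simp
    · calc _ ≤ 4 * (2 * s / k) ^ 2 * (t ^ (1 / 2 : ℝ) * (k : ℝ) ^ (1 / 2 : ℝ)) := by
            gcongr; exact abs_bp_sub_half_le ht
        _ = _ := by
            have e1 : (k : ℝ) ^ (1 / 2 : ℝ) * (k : ℝ) ^ (3 / 2 : ℝ) = (k : ℝ) ^ 2 := by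
              rw [← Real.rpow_add hk0]; norm_num
            have : 0 < (k : ℝ) ^ (3 / 2 : ℝ) := by positivity
            field_simp
            rw [mul_assoc, e1]
            ring
    · calc _ ≤ Real.exp (-(t * k)) * (4 * (k * |τ| * r) ^ 3) := by gcongr
        _ = _ := by ring
    · calc _ ≤ Real.exp (-(t * k)) * (k * τ * r) ^ 4 := by gcongr
        _ = _ := by ring
  refine (Finset.sum_le_sum hterm).trans ?_
  simp only [Finset.sum_add_distrib, ← Finset.mul_sum]
  have s0 := sum_pow_mul_exp_le ht 0 n
  have s3 := sum_pow_mul_exp_le ht 3 n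
  have s4 := sum_pow_mul_exp_le ht 4 n
  have sK : ∑ k ∈ Finset.Icc 1 n, 1 / (k : ℝ) ^ (3 / 2 : ℝ) ≤ K :=
    hsum.sum_le_tsum _ fun k _ => by positivity
  -- Powers of the tilting parameter, with `u = √t`.
  set u := t ^ (1 / 2 : ℝ) with hu
  have hu0 : 0 < u := by positivity
  have eu : t = u ^ 2 := by
    rw [hu, ← Real.rpow_natCast, ← Real.rpow_mul ht.le]; norm_num
  have eu3 : t ^ (3 / 2 : ℝ) = u ^ 3 := by
    rw [hu, ← Real.rpow_natCast, ← Real.rpow_mul ht.le]; norm_num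
  rw [eu3] at hrle
  have f0 : 2 * |s| * |τ| * r * ∑ k ∈ Finset.Icc 1 n, (k : ℝ) ^ 0 * Real.exp (-(t * k)) ≤
      2 * |s| * |τ| * 48 * 2 * u := by
    calc _ ≤ 2 * |s| * |τ| * (48 * u ^ 3) * ((0 : ℕ).factorial * (2 / t) ^ (0 + 1)) :=
          mul_le_mul (mul_le_mul_of_nonneg_left hrle (by positivity)) s0
            (Finset.sum_nonneg fun k _ => by positivity) (by positivity)
      _ = _ := by
          rw [eu, Nat.factorial_zero, zero_add, pow_one, Nat.cast_one]
          have e : 2 / u ^ 2 * u ^ 3 = 2 * u := by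
            rw [pow_succ u 2, ← mul_assoc, div_mul_cancel₀ _ (by positivity)]
          linear_combination (2 * |s| * |τ| * 48) * e
  have f3 : 4 * |τ| ^ 3 * r ^ 3 * ∑ k ∈ Finset.Icc 1 n, (k : ℝ) ^ 3 * Real.exp (-(t * k)) ≤
      4 * |τ| ^ 3 * 48 ^ 3 * (6 * 16) * u := by
    calc _ ≤ 4 * |τ| ^ 3 * (48 * u ^ 3) ^ 3 * ((3 : ℕ).factorial * (2 / t) ^ (3 + 1)) := by gcongr
      _ = _ := by rw [eu]; norm_num [Nat.factorial]; field_simp; ring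
  have f4 : τ ^ 4 * r ^ 4 * ∑ k ∈ Finset.Icc 1 n, (k : ℝ) ^ 4 * Real.exp (-(t * k)) ≤
      τ ^ 4 * 48 ^ 4 * (24 * 32) * t := by
    calc _ ≤ τ ^ 4 * (48 * u ^ 3) ^ 4 * ((4 : ℕ).factorial * (2 / t) ^ (4 + 1)) := by gcongr
      _ = _ := by rw [eu]; norm_num [Nat.factorial]; field_simp; ring
  have fK : 16 * s ^ 2 * u * ∑ k ∈ Finset.Icc 1 n, 1 / (k : ℝ) ^ (3 / 2 : ℝ) ≤
      16 * s ^ 2 * K * u := by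
    calc _ ≤ 16 * s ^ 2 * u * K := by gcongr
      _ = _ := by ring
  rw [hA, hB]
  linarith

lemma tendsto_psi {s : ℝ} {φ : ℂ}
    (hφ : Tendsto (fun m : ℕ => ∏ k ∈ Finset.Icc 1 m, (Real.cos (s / k) : ℂ)) atTop (nhds φ))
    (τ : ℝ) : Tendsto (fun n => psi n s τ) atTop (nhds (φ * Real.exp (-(τ ^ 2 / 2)))) := by
  obtain ⟨C, hC⟩ := psi_sub_le s τ
  have hlim : Tendsto (fun n => C * tn n ^ (1 / 2 : ℝ) + C * tn n) atTop (nhds 0) := by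
    simpa using ((tendsto_rpow_tn (a := 1 / 2) (by norm_num)).const_mul C).add
      (tendsto_tn.const_mul C)
  have hd : Tendsto (fun n : ℕ => psi n s τ - (∏ k ∈ Finset.Icc 1 n, (Real.cos (s / k) : ℂ)) *
      Real.exp (-(τ ^ 2 / 2))) atTop (nhds 0) := by
    refine squeeze_zero_norm' ?_ hlim
    filter_upwards [eventually_gt_atTop 0] with n hn using hC n hn
  have := hd.add (hφ.mul_const (Real.exp (-(τ ^ 2 / 2)) : ℂ))
  simpa using this

/-! ### Domination of the joint characteristic function -/

lemma norm_cf_le_exp (p x : ℝ) :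
    ‖cf p x‖ ≤ Real.exp (-(p * (1 - p) * (1 - Real.cos x))) := by
  have hsq : ‖cf p x‖ ^ 2 = 1 - 2 * (p * (1 - p) * (1 - Real.cos x)) := by
    rw [norm_cf_eq, ← Complex.normSq_eq_norm_sq]
    have e : (1 - p + p * Complex.exp (Complex.I * x) : ℂ) =
        ((1 - p + p * Real.cos x : ℝ) : ℂ) + ((p * Real.sin x : ℝ) : ℂ) * Complex.I := by
      rw [mul_comm Complex.I, Complex.exp_mul_I]
      push_cast; ring
    rw [e, Complex.normSq_add_mul_I]
    linear_combination p ^ 2 * Real.sin_sq_add_cos_sq x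
  have h2 := Real.add_one_le_exp (-(2 * (p * (1 - p) * (1 - Real.cos x))))
  have h3 : Real.exp (-(2 * (p * (1 - p) * (1 - Real.cos x)))) =
      Real.exp (-(p * (1 - p) * (1 - Real.cos x))) ^ 2 := by
    rw [← Real.exp_nat_mul]; congr 1; push_cast; ring
  refine (sq_le_sq₀ (norm_nonneg _) (Real.exp_pos _).le).1 ?_
  linarith

/-- Perturbing the argument by `y` costs at most half of `1 - cos z` and `y² / 2`. -/
lemma one_sub_cos_add_ge (y z : ℝ) :
    (1 - Real.cos z) / 2 - y ^ 2 / 2 ≤ 1 - Real.cos (y + z) := by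
  have hc : ∀ a : ℝ, 1 - Real.cos a = 2 * Real.sin (a / 2) ^ 2 := fun a => by
    have h := Real.cos_two_mul (a / 2)
    rw [mul_div_cancel₀ _ (two_ne_zero)] at h
    have := Real.sin_sq_add_cos_sq (a / 2)
    linarith
  have hy : 1 - Real.cos y ≤ y ^ 2 / 2 := by linarith [Real.one_sub_sq_div_two_le_cos (x := y)]
  rw [hc] at hy ⊢
  rw [hc]
  have e : Real.sin (z / 2) = Real.sin ((y + z) / 2) * Real.cos (y / 2) -
      Real.cos ((y + z) / 2) * Real.sin (y / 2) := by
    rw [← Real.sin_sub]; congr 1; ring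
  set a := Real.sin ((y + z) / 2)
  set b := Real.sin (y / 2)
  have h1 := Real.sin_sq_add_cos_sq (y / 2)
  have h2 := Real.sin_sq_add_cos_sq ((y + z) / 2)
  have h3 : Real.sin (z / 2) ^ 2 ≤ 2 * a ^ 2 + 2 * b ^ 2 := by
    rw [e]
    have a1 : (a * Real.cos (y / 2)) ^ 2 ≤ a ^ 2 := by
      rw [mul_pow]; exact mul_le_of_le_one_right (sq_nonneg _) (Real.cos_sq_le_one _)
    have a2 : (Real.cos ((y + z) / 2) * b) ^ 2 ≤ b ^ 2 := by
      rw [mul_pow]; exact mul_le_of_le_one_left (sq_nonneg _) (Real.cos_sq_le_one _)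
    nlinarith [sq_nonneg (a * Real.cos (y / 2) + Real.cos ((y + z) / 2) * b)]
  linarith

lemma sum_one_sub_cos_small {M : ℕ} {θ : ℝ} (h : |θ| * M ≤ Real.pi) :
    2 / Real.pi ^ 2 * θ ^ 2 * (M : ℝ) ^ 3 / 3 ≤
      ∑ k ∈ Finset.Icc 1 M, (1 - Real.cos (k * θ)) := by
  have h1 : ∑ k ∈ Finset.Icc 1 M, 2 / Real.pi ^ 2 * θ ^ 2 * (k : ℝ) ^ 2 ≤
      ∑ k ∈ Finset.Icc 1 M, (1 - Real.cos (k * θ)) := by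
    refine Finset.sum_le_sum fun k hk => ?_
    have hk' : (k : ℝ) ≤ M := by exact_mod_cast (Finset.mem_Icc.1 hk).2
    have hle : |k * θ| ≤ Real.pi := by
      rw [abs_mul, Nat.abs_cast, mul_comm]
      exact le_trans (by gcongr) h
    have := Real.cos_le_one_sub_mul_cos_sq hle
    calc _ = 2 / Real.pi ^ 2 * (k * θ) ^ 2 := by ring
      _ ≤ _ := by linarith
  rw [← Finset.mul_sum] at h1
  refine le_trans ?_ h1
  rw [mul_div_assoc]
  exact mul_le_mul_of_nonneg_left (cube_le_sum_sq M) (by positivity)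

lemma two_sin_mul_sum_cos (M : ℕ) (θ : ℝ) :
    2 * Real.sin (θ / 2) * ∑ k ∈ Finset.Icc 1 M, Real.cos (k * θ) =
      Real.sin (M * θ + θ / 2) - Real.sin (θ / 2) := by
  induction M with
  | zero => simp
  | succ M ih =>
    rw [Finset.sum_Icc_succ_top (by omega), mul_add, ih]
    push_cast
    have e1 : Real.sin (M * θ + θ / 2) = Real.sin ((M + 1) * θ - θ / 2) := by congr 1; ring
    rw [e1, Real.sin_sub, Real.sin_add]
    ring

/-- Away from the origin a positive proportion of the terms `1 - cos (kθ)` is of constant order: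
the Dirichlet kernel is at most `1 / (2 |sin (θ/2)|)`. -/
lemma sum_one_sub_cos_large {M : ℕ} {θ : ℝ} (hθ : |θ| ≤ Real.pi) (h : Real.pi ≤ |θ| * M) :
    (M : ℝ) / 2 ≤ ∑ k ∈ Finset.Icc 1 M, (1 - Real.cos (k * θ)) := by
  wlog hpos : 0 ≤ θ generalizing θ
  · have := this (θ := -θ) (by rwa [abs_neg]) (by rwa [abs_neg]) (by linarith)
    simpa using this
  rw [abs_of_nonneg hpos] at hθ h
  have hp := Real.pi_pos
  have hM : (0 : ℝ) < M := by
    by_contra hc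
    have : (M : ℝ) = 0 := le_antisymm (not_lt.1 hc) (by positivity)
    rw [this] at h; linarith
  have hs : θ / Real.pi ≤ Real.sin (θ / 2) := by
    have := Real.mul_le_sin (x := θ / 2) (by linarith) (by linarith)
    calc _ = 2 / Real.pi * (θ / 2) := by ring
      _ ≤ _ := this
  have hs2 : 1 / (M : ℝ) ≤ Real.sin (θ / 2) := by
    refine le_trans ?_ hs
    rw [div_le_div_iff₀ hM hp]; linarith
  have h1 := two_sin_mul_sum_cos M θ
  have h2 := Real.sin_le_one (M * θ + θ / 2)
  rw [Finset.sum_sub_distrib]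
  simp only [Finset.sum_const, Nat.card_Icc, Nat.add_sub_cancel, nsmul_eq_mul, mul_one]
  set T := ∑ k ∈ Finset.Icc 1 M, Real.cos (k * θ)
  have hs0 : 0 < Real.sin (θ / 2) := lt_of_lt_of_le (by positivity) hs2
  have h3 : 1 ≤ Real.sin (θ / 2) * M := by
    rwa [div_le_iff₀ hM] at hs2
  have h4 : 2 * Real.sin (θ / 2) * T ≤ Real.sin (θ / 2) * M := by linarith
  have h5 : 2 * T ≤ M := by
    have : Real.sin (θ / 2) * (2 * T) ≤ Real.sin (θ / 2) * M := by linarith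
    exact le_of_mul_le_mul_left this hs0
  linarith

/-- The decay in `τ` comes from the indices `k ≤ √n`, where `p_k (1 - p_k) ≥ 1/12`; the shift
`2s/k` of the argument only costs a constant because `∑ 1/k²` converges. -/
lemma norm_psi_le (s : ℝ) : ∃ C : ℝ, 0 ≤ C ∧ ∀ (n : ℕ), 0 < n → ∀ τ : ℝ,
    ‖psi n s τ‖ ≤
      C * Real.exp (-(1 / 24 * ∑ k ∈ Finset.Icc 1 (Nat.sqrt n), (1 - Real.cos (k * (τ / sg n))))) := by
  have hsum : Summable (fun k : ℕ => 1 / (k : ℝ) ^ 2) := hasSum_zeta_two.summable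
  refine ⟨Real.exp (s ^ 2 / 6 * ∑' k : ℕ, 1 / (k : ℝ) ^ 2), (Real.exp_pos _).le, fun n hn τ => ?_⟩
  have ht := tn_pos hn
  rw [← Real.exp_add, psi, norm_prod]
  obtain ⟨-, h2⟩ := sqrt_bounds hn
  set M := Nat.sqrt n with hM
  have hsub : Finset.Icc 1 M ⊆ Finset.Icc 1 n := Finset.Icc_subset_Icc_right (Nat.sqrt_le_self n)
  have h3 : ∏ k ∈ Finset.Icc 1 n, ‖cf (bp (tn n) k) (2 * s / k + k * τ / sg n)‖ ≤
      ∏ k ∈ Finset.Icc 1 M, ‖cf (bp (tn n) k) (2 * s / k + k * τ / sg n)‖ := by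
    rw [← Finset.prod_sdiff hsub]
    refine mul_le_of_le_one_left (Finset.prod_nonneg fun _ _ => norm_nonneg _) ?_
    exact Finset.prod_le_one (fun _ _ => norm_nonneg _) fun k _ =>
      norm_cf_le (bp_pos _ _).le (bp_le_one ht.le k) _
  refine h3.trans ?_
  have h4 : ∏ k ∈ Finset.Icc 1 M, ‖cf (bp (tn n) k) (2 * s / k + k * τ / sg n)‖ ≤
      ∏ k ∈ Finset.Icc 1 M, Real.exp (s ^ 2 / 6 * (1 / (k : ℝ) ^ 2) -
        1 / 24 * (1 - Real.cos (k * (τ / sg n)))) := by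
    refine Finset.prod_le_prod (fun _ _ => norm_nonneg _) fun k hk => ?_
    refine (norm_cf_le_exp _ _).trans (Real.exp_le_exp.2 ?_)
    have hk0 : (0 : ℝ) < k := by exact_mod_cast (Finset.mem_Icc.1 hk).1
    have hk' : (k : ℝ) ≤ M := by exact_mod_cast (Finset.mem_Icc.1 hk).2
    have hq := bp_var_ge (t := tn n) (k := k) (le_trans (by gcongr) h2) ht.le
    have ez : (k : ℝ) * τ / sg n = k * (τ / sg n) := mul_div_assoc _ _ _
    rw [ez]
    have hc := one_sub_cos_add_ge (2 * s / k) (k * (τ / sg n))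
    have hc0 : 0 ≤ 1 - Real.cos (2 * s / k + k * (τ / sg n)) := by
      linarith [Real.cos_le_one (2 * s / k + k * (τ / sg n))]
    have hm := mul_le_mul_of_nonneg_right hq hc0
    have e1 : (2 * s / k) ^ 2 / 2 = 2 * s ^ 2 * (1 / (k : ℝ) ^ 2) := by field_simp
    rw [e1] at hc
    linarith
  refine h4.trans ?_
  rw [← Real.exp_sum, Finset.sum_sub_distrib, ← Finset.mul_sum, ← Finset.mul_sum, sub_eq_add_neg]
  refine Real.exp_le_exp.2 (add_le_add ?_ le_rfl)
  exact mul_le_mul_of_nonneg_left (hsum.sum_le_tsum _ fun k _ => by positivity) (by positivity)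

/-- An integrable bound on the range of the inversion integral, uniform in `n`. For
`|τ| / σ_n ≤ π / √n` the exponent is at least a multiple of `τ²`; beyond, it is at least a multiple
of `√n`, whereas `τ²` is at most of order `n^{3/2}`. -/
lemma psi_dominated (s : ℝ) : ∃ C : ℝ, ∀ (n : ℕ), 0 < n → ∀ τ : ℝ, |τ| ≤ Real.pi * sg n →
    ‖psi n s τ‖ ≤ C * (1 + τ ^ 2)⁻¹ := by
  obtain ⟨C, hC0, hC⟩ := norm_psi_le s
  refine ⟨C * 10 ^ 11, fun n hn τ hτ => (hC n hn τ).trans ?_⟩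
  rw [mul_assoc]
  refine mul_le_mul_of_nonneg_left ?_ hC0
  have ht := tn_pos hn
  have hs := sg_pos hn
  obtain ⟨h1, h2⟩ := sqrt_bounds hn
  have hM1 : 0 < Nat.sqrt n := Nat.sqrt_pos.2 hn
  set M := Nat.sqrt n with hM
  have hM1' : (1 : ℝ) ≤ M := by exact_mod_cast hM1
  have hp3 := Real.pi_gt_three
  have hp4 := Real.pi_lt_four
  have hinv : 1 / tn n ≤ 4 * M := by
    rw [div_le_iff₀ (by positivity)] at h1 ⊢; linarith
  -- The variance is at most a constant times `M ^ 3`.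
  have hv : sg n ^ 2 ≤ 1024 * (M : ℝ) ^ 3 := by
    rw [sg_sq hn]
    refine (vn_le hn).trans ?_
    calc (16 : ℝ) / tn n ^ 3 = 16 * (1 / tn n) ^ 3 := by field_simp
      _ ≤ 16 * (4 * (M : ℝ)) ^ 3 := by gcongr
      _ = _ := by ring
  have habs : |τ / sg n| ≤ Real.pi := by
    rw [abs_div, abs_of_pos hs, div_le_iff₀ hs]; exact hτ
  rw [Real.exp_neg, ← inv_inv ((10 : ℝ) ^ 11), ← mul_inv]
  refine inv_anti₀ (by positivity) ?_
  rw [inv_mul_le_iff₀ (by positivity)]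
  rcases le_total (|τ / sg n| * M) Real.pi with h | h
  · have h3 := sum_one_sub_cos_small h
    set Q := ∑ k ∈ Finset.Icc 1 M, (1 - Real.cos (k * (τ / sg n)))
    have h4 : τ ^ 2 / 1024 ≤ (τ / sg n) ^ 2 * (M : ℝ) ^ 3 := by
      rw [div_pow, div_mul_eq_mul_div, div_le_div_iff₀ (by norm_num) (by positivity)]
      calc τ ^ 2 * sg n ^ 2 ≤ τ ^ 2 * (1024 * (M : ℝ) ^ 3) := by gcongr
        _ = _ := by ring
    have h5 : 1 / 8 ≤ 2 / Real.pi ^ 2 := by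
      rw [div_le_div_iff₀ (by norm_num) (by positivity)]; nlinarith
    have h6 : 1 / 8 * (τ ^ 2 / 1024) / 3 ≤ Q := by
      refine le_trans ?_ h3
      rw [mul_assoc (2 / Real.pi ^ 2)]
      gcongr
    have h7 := Real.add_one_le_exp (1 / 24 * Q)
    nlinarith [sq_nonneg τ]
  · have h3 := sum_one_sub_cos_large habs h
    set Q := ∑ k ∈ Finset.Icc 1 M, (1 - Real.cos (k * (τ / sg n)))
    have h4 : τ ^ 2 ≤ 16 * (1024 * (M : ℝ) ^ 3) := by
      calc τ ^ 2 = |τ| ^ 2 := (sq_abs τ).symm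
        _ ≤ (Real.pi * sg n) ^ 2 := by gcongr
        _ = Real.pi ^ 2 * sg n ^ 2 := by ring
        _ ≤ 16 * (1024 * (M : ℝ) ^ 3) := by
          refine mul_le_mul (by nlinarith) hv (by positivity) (by norm_num)
    have h5 := Real.pow_div_factorial_le_exp (1 / 24 * Q) (by linarith) 3
    have h6 : ((M : ℝ) / 48) ^ 3 ≤ (1 / 24 * Q) ^ 3 := by gcongr; linarith
    have h7 : (1 : ℝ) ≤ (M : ℝ) ^ 3 := one_le_pow₀ hM1'
    have h8 : ((3 : ℕ).factorial : ℝ) = 6 := by norm_num [Nat.factorial]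
    rw [h8] at h5
    have h9 : (M : ℝ) ^ 3 / 48 ^ 3 / 6 ≤ Real.exp (1 / 24 * Q) := by
      rw [div_pow] at h6; linarith
    calc 1 + τ ^ 2 ≤ 16385 * (M : ℝ) ^ 3 := by linarith
      _ ≤ 10 ^ 11 * ((M : ℝ) ^ 3 / 48 ^ 3 / 6) := by nlinarith
      _ ≤ _ := by
        refine mul_le_mul_of_nonneg_left h9 (by norm_num)

/-! ### Fourier inversion: from independent Bernoulli parts to uniform partitions -/

lemma integral_exp_int (m : ℤ) :
    ∫ θ in (-Real.pi)..Real.pi, Complex.exp (Complex.I * (m : ℂ) * (θ : ℂ)) =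
      if m = 0 then (2 * Real.pi : ℂ) else 0 := by
  split_ifs with h
  · subst h
    simp
    ring
  · have hm : Complex.I * (m : ℂ) ≠ 0 := mul_ne_zero Complex.I_ne_zero (by exact_mod_cast h)
    rw [integral_exp_mul_complex hm, div_eq_zero_iff]
    left
    rw [sub_eq_zero, Complex.exp_eq_exp_iff_exists_int]
    exact ⟨m, by push_cast; ring⟩

/-- Normalising constant of the Boltzmann model: `∏ (1 + e^{-tk})`. -/
noncomputable def Zn (n : ℕ) (t : ℝ) : ℂ := ∏ k ∈ Finset.Icc 1 n, (1 + Complex.exp (-(t * k : ℝ)))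

lemma one_add_exp_ne (a : ℝ) : (1 + Complex.exp (a : ℝ) : ℂ) ≠ 0 := by
  rw [← Complex.ofReal_exp]
  have : (0 : ℝ) < 1 + Real.exp a := by positivity
  exact_mod_cast this.ne'

lemma Zn_ne (n : ℕ) (t : ℝ) : Zn n t ≠ 0 :=
  Finset.prod_ne_zero_iff.2 fun k _ => by
    have := one_add_exp_ne (-(t * k))
    push_cast at this ⊢
    exact this

/-- The Boltzmann product as a generating function over sets `A` of parts. -/
lemma prod_expand (n : ℕ) (t s θ : ℝ) :
    ∏ k ∈ Finset.Icc 1 n, (1 - bp t k + bp t k *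
        Complex.exp (Complex.I * ((2 * s / k + k * θ : ℝ) : ℂ))) =
      (Zn n t)⁻¹ * ∑ A ∈ (Finset.Icc 1 n).powerset,
        Complex.exp (-(t * (∑ k ∈ A, k : ℕ))) *
          Complex.exp (Complex.I * (s * (2 * ∑ k ∈ A, ((k : ℝ)⁻¹ : ℝ)) : ℝ)) *
          Complex.exp (Complex.I * θ * (∑ k ∈ A, k : ℕ)) := by
  have h1 : ∀ k : ℕ, (1 - bp t k + bp t k *
        Complex.exp (Complex.I * ((2 * s / k + k * θ : ℝ) : ℂ))) =
      (1 + Complex.exp (-(t * k : ℝ)))⁻¹ * (1 + Complex.exp (-(t * k : ℝ)) *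
        Complex.exp (Complex.I * ((2 * s / k + k * θ : ℝ) : ℂ))) := fun k => by
    have hne : (1 + Complex.exp (-(t * k : ℝ)) : ℂ) ≠ 0 := by
      have := one_add_exp_ne (-(t * k)); push_cast at this ⊢; exact this
    have hb : (bp t k : ℂ) = (1 + Complex.exp (-(t * k : ℝ)))⁻¹ * Complex.exp (-(t * k : ℝ)) := by
      rw [eq_inv_mul_iff_mul_eq₀ hne]
      have : (1 + Real.exp (-(t * k))) * bp t k = Real.exp (-(t * k)) := by
        rw [bp, Real.exp_neg]
        have := Real.exp_pos (t * k)
        field_simp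
      exact_mod_cast this
    rw [hb]
    field_simp
    ring
  rw [Finset.prod_congr rfl fun k _ => h1 k, Finset.prod_mul_distrib, Finset.prod_inv_distrib, ← Zn,
    Finset.prod_one_add]
  refine congrArg₂ _ rfl (Finset.sum_congr rfl fun A _ => ?_)
  rw [Finset.prod_mul_distrib, ← Complex.exp_sum, ← Complex.exp_sum, mul_assoc,
    ← Complex.exp_add (Complex.I * _)]
  congr 2
  · push_cast
    rw [Finset.mul_sum, Finset.sum_neg_distrib]
  · push_cast
    simp only [Finset.mul_sum, ← Finset.sum_add_distrib]
    refine Finset.sum_congr rfl fun k _ => ?_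
    rw [div_eq_mul_inv]; ring

/-- Distinct parts partitions of `n` are the subsets of `{1, …, n}` with element sum `n`. -/
lemma sum_distincts (n : ℕ) (g : ℝ → ℂ) :
    ∑ lam ∈ Nat.Partition.distincts n, g (S lam) =
      ∑ A ∈ (Finset.Icc 1 n).powerset with ∑ k ∈ A, k = n, g (∑ k ∈ A, (k : ℝ)⁻¹) := by
  have hnd : ∀ lam ∈ Nat.Partition.distincts n, lam.parts.Nodup := fun lam h => by
    simpa [Nat.Partition.distincts] using h
  refine Finset.sum_bij (fun lam _ => lam.parts.toFinset) ?_ ?_ ?_ ?_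
  · intro lam h
    have hv : lam.parts.toFinset.val = lam.parts := by
      rw [Multiset.toFinset_val, (hnd lam h).dedup]
    rw [Finset.mem_filter, Finset.mem_powerset]
    refine ⟨fun k hk => ?_, ?_⟩
    · rw [Multiset.mem_toFinset] at hk
      exact Finset.mem_Icc.2 ⟨lam.parts_pos hk, lam.parts_sum ▸ Multiset.le_sum_of_mem hk⟩
    · rw [Finset.sum, hv, Multiset.map_id', lam.parts_sum]
  · intro a ha b hb hab
    have h2 := congrArg Finset.val hab
    simp only [Multiset.toFinset_val, (hnd a ha).dedup, (hnd b hb).dedup] at h2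
    exact Nat.Partition.ext h2
  · intro A hA
    rw [Finset.mem_filter, Finset.mem_powerset] at hA
    refine ⟨⟨A.val, fun {i} hi => (Finset.mem_Icc.1 (hA.1 hi)).1, ?_⟩, ?_, ?_⟩
    · rw [← hA.2, Finset.sum, Multiset.map_id']
    · simpa [Nat.Partition.distincts] using A.nodup
    · simp
  · intro lam h
    have hv : lam.parts.toFinset.val = lam.parts := by
      rw [Multiset.toFinset_val, (hnd lam h).dedup]
    -- In `S` the multiset of parts itself is coerced to a multiset of reals.
    have hS : S lam = (lam.parts.map fun k : ℕ => (k : ℝ)⁻¹).sum := by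
      simp [S, Multiset.bind_def, Multiset.pure_def, Multiset.bind_singleton]
    rw [hS, Finset.sum, hv]

/-- Extraction of the coefficient of `e^{iθn}` from the Boltzmann product. The constant on the
right does not depend on `s`. -/
lemma fourier_coeff (n : ℕ) (t s : ℝ) :
    ∫ θ in (-Real.pi)..Real.pi, (∏ k ∈ Finset.Icc 1 n, (1 - bp t k + bp t k *
        Complex.exp (Complex.I * ((2 * s / k + k * θ : ℝ) : ℂ)))) *
          Complex.exp (-(Complex.I * θ * n)) =
      (2 * Real.pi * (Zn n t)⁻¹ * Complex.exp (-(t * n))) *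
        ∑ lam ∈ Nat.Partition.distincts n, Complex.exp (Complex.I * (s * (2 * S lam) : ℝ)) := by
  rw [sum_distincts n (fun y => Complex.exp (Complex.I * (s * (2 * y) : ℝ)))]
  have h1 : ∀ θ : ℝ, (∏ k ∈ Finset.Icc 1 n, (1 - bp t k + bp t k *
        Complex.exp (Complex.I * ((2 * s / k + k * θ : ℝ) : ℂ)))) *
          Complex.exp (-(Complex.I * θ * n)) =
      ∑ A ∈ (Finset.Icc 1 n).powerset, ((Zn n t)⁻¹ *
        Complex.exp (-(t * (∑ k ∈ A, k : ℕ))) *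
          Complex.exp (Complex.I * (s * (2 * ∑ k ∈ A, ((k : ℝ)⁻¹ : ℝ)) : ℝ))) *
          Complex.exp (Complex.I * (((∑ k ∈ A, k : ℕ) - n : ℤ) : ℂ) * θ) := fun θ => by
    rw [prod_expand, Finset.mul_sum, Finset.sum_mul]
    refine Finset.sum_congr rfl fun A _ => ?_
    have : Complex.exp (Complex.I * (((∑ k ∈ A, k : ℕ) - n : ℤ) : ℂ) * θ) =
        Complex.exp (Complex.I * θ * (∑ k ∈ A, k : ℕ)) * Complex.exp (-(Complex.I * θ * n)) := by
      rw [← Complex.exp_add]; congr 1; push_cast; ring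
    rw [this]; ring
  simp only [h1]
  rw [intervalIntegral.integral_finsetSum
    (fun A _ => (by fun_prop : Continuous _).intervalIntegrable _ _)]
  simp only [intervalIntegral.integral_const_mul, integral_exp_int]
  rw [Finset.sum_filter, Finset.mul_sum]
  refine Finset.sum_congr rfl fun A _ => ?_
  by_cases hA : ∑ k ∈ A, k = n
  · rw [if_pos hA, if_pos (by rw [hA]; simp), hA]
    ring
  · rw [if_neg hA, if_neg (by rw [sub_eq_zero]; exact_mod_cast hA)]
    simp

/-! ### The local limit theorem and the characteristic function under `P_n` -/

/-- Centring correction for the reciprocal sum: `E[2S] - log √(3n)` in the Boltzmann model. -/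
noncomputable def dn (n : ℕ) : ℝ :=
  2 * ∑ k ∈ Finset.Icc 1 n, (1 / (k : ℝ)) * bp (tn n) k - Real.log (Real.sqrt (3 * n))

/-- Standardised centring correction for the size: `(E[N] - n) / σ_n` in the Boltzmann model. -/
noncomputable def en (n : ℕ) : ℝ := (∑ k ∈ Finset.Icc 1 n, (k : ℝ) * bp (tn n) k - n) / sg n

/-- Undoing the centring in `psi`: it only contributes a phase, which is recorded by `dn` and
`en`. -/
lemma psi_mul_eq (n : ℕ) (s τ : ℝ) :
    psi n s τ * Complex.exp (Complex.I * (s * dn n + τ * en n : ℝ)) =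
      Complex.exp (-(Complex.I * (s * Real.log (Real.sqrt (3 * n)) : ℝ))) *
      ((∏ k ∈ Finset.Icc 1 n, (1 - bp (tn n) k + bp (tn n) k *
        Complex.exp (Complex.I * ((2 * s / k + k * (τ / sg n) : ℝ) : ℂ)))) *
          Complex.exp (-(Complex.I * (τ / sg n : ℝ) * n))) := by
  have h1 : ∀ k : ℕ, (2 * s / k + k * τ / sg n : ℝ) = 2 * s / k + k * (τ / sg n) := fun k => by
    rw [mul_div_assoc (k : ℝ)]
  simp only [psi, cf, h1]
  rw [Finset.prod_mul_distrib, ← Complex.exp_sum]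
  set Q := ∏ k ∈ Finset.Icc 1 n, (1 - bp (tn n) k + bp (tn n) k *
        Complex.exp (Complex.I * ((2 * s / k + k * (τ / sg n) : ℝ) : ℂ)))
  have h2 : ∑ k ∈ Finset.Icc 1 n, bp (tn n) k * (2 * s / k + k * (τ / sg n)) =
      s * dn n + s * Real.log (Real.sqrt (3 * n)) + τ * en n + τ / sg n * n := by
    have e1 : s * dn n + s * Real.log (Real.sqrt (3 * n)) =
        ∑ k ∈ Finset.Icc 1 n, 2 * s * ((1 / (k : ℝ)) * bp (tn n) k) := by
      rw [dn, ← Finset.mul_sum]; ring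
    have e2 : τ * en n + τ / sg n * n =
        ∑ k ∈ Finset.Icc 1 n, τ / sg n * ((k : ℝ) * bp (tn n) k) := by
      rw [en, ← Finset.mul_sum]; ring
    rw [e1, add_assoc, e2, ← Finset.sum_add_distrib]
    exact Finset.sum_congr rfl fun k _ => by ring
  have h3 : ∑ k ∈ Finset.Icc 1 n,
      -(Complex.I * ((bp (tn n) k * (2 * s / k + k * (τ / sg n)) : ℝ) : ℂ)) =
      -(Complex.I * (s * dn n + s * Real.log (Real.sqrt (3 * n)) + τ * en n + τ / sg n * n : ℝ)) := by
    rw [← h2, Finset.sum_neg_distrib, ← Finset.mul_sum, Complex.ofReal_sum]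
  rw [h3, mul_right_comm, ← Complex.exp_add, ← mul_assoc, mul_right_comm, ← Complex.exp_add]
  congr 2
  push_cast
  ring

/-- Unnormalised characteristic function of `2 S - log √(3n)` over distinct parts partitions. -/
noncomputable def Fn (n : ℕ) (s : ℝ) : ℂ :=
  ∑ lam ∈ Nat.Partition.distincts n,
    Complex.exp (Complex.I * (s * (2 * S lam - Real.log (Real.sqrt (3 * n))) : ℝ))

/-- The normalisation in the inversion formula. -/
noncomputable def cn (n : ℕ) : ℂ :=
  sg n * (2 * Real.pi * (Zn n (tn n))⁻¹ * Complex.exp (-(tn n * n)))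

lemma cn_ne {n : ℕ} (hn : 0 < n) : cn n ≠ 0 := by
  have h1 : (sg n : ℂ) ≠ 0 := by exact_mod_cast (sg_pos hn).ne'
  have h2 : (Real.pi : ℂ) ≠ 0 := by exact_mod_cast Real.pi_ne_zero
  exact mul_ne_zero h1 (mul_ne_zero (mul_ne_zero (mul_ne_zero two_ne_zero h2)
    (inv_ne_zero (Zn_ne _ _))) (Complex.exp_ne_zero _))

/-- The inversion formula after the substitution `θ = τ / σ_n`. -/
lemma inversion {n : ℕ} (hn : 0 < n) (s : ℝ) :
    ∫ τ in (-(Real.pi * sg n))..(Real.pi * sg n),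
        psi n s τ * Complex.exp (Complex.I * (s * dn n + τ * en n : ℝ)) = cn n * Fn n s := by
  have hs := sg_pos hn
  simp only [psi_mul_eq]
  rw [intervalIntegral.integral_const_mul]
  have h := intervalIntegral.integral_comp_div (a := -(Real.pi * sg n)) (b := Real.pi * sg n)
    (fun θ : ℝ => (∏ k ∈ Finset.Icc 1 n, (1 - bp (tn n) k + bp (tn n) k *
        Complex.exp (Complex.I * ((2 * s / k + k * θ : ℝ) : ℂ)))) *
          Complex.exp (-(Complex.I * θ * n))) hs.ne'
  rw [h, neg_div, mul_div_cancel_right₀ _ hs.ne', fourier_coeff, Complex.real_smul, cn, Fn]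
  have e : ∑ lam ∈ Nat.Partition.distincts n,
      Complex.exp (Complex.I * (s * (2 * S lam - Real.log (Real.sqrt (3 * n))) : ℝ)) =
      Complex.exp (-(Complex.I * (s * Real.log (Real.sqrt (3 * n)) : ℝ))) *
      ∑ lam ∈ Nat.Partition.distincts n, Complex.exp (Complex.I * (s * (2 * S lam) : ℝ)) := by
    rw [Finset.mul_sum]
    refine Finset.sum_congr rfl fun lam _ => ?_
    rw [← Complex.exp_add]; congr 1; push_cast; ring
  rw [e]
  ring

lemma tendsto_sg : Tendsto sg atTop atTop := by
  have h : Tendsto (fun n => 1 / sg n) atTop (nhds 0) := by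
    refine squeeze_zero' (g := fun n => 48 * tn n ^ (3 / 2 : ℝ)) ?_ ?_ ?_
    · filter_upwards [eventually_gt_atTop 0] with n hn
      exact (one_div_pos.2 (sg_pos hn)).le
    · filter_upwards [eventually_gt_atTop 0] with n hn
      exact inv_sg_le hn
    · simpa using (tendsto_rpow_tn (by norm_num : (0 : ℝ) < 3 / 2)).const_mul 48
  have h2 : Tendsto (fun n => 1 / sg n) atTop (nhdsWithin 0 (Set.Ioi 0)) := by
    refine tendsto_nhdsWithin_iff.2 ⟨h, ?_⟩
    filter_upwards [eventually_gt_atTop 0] with n hn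
    exact one_div_pos.2 (sg_pos hn)
  have h3 := h2.inv_tendsto_nhdsGT_zero
  refine h3.congr fun n => ?_
  simp

/-- The local limit: the inversion integrals converge to a Gaussian integral. -/
lemma tendsto_cn_mul_Fn {s : ℝ} {φ : ℂ}
    (hφ : Tendsto (fun m : ℕ => ∏ k ∈ Finset.Icc 1 m, (Real.cos (s / k) : ℂ)) atTop (nhds φ)) :
    Tendsto (fun n => cn n * Fn n s) atTop (nhds (φ * (Real.sqrt (2 * Real.pi) : ℝ))) := by
  obtain ⟨C, hC⟩ := psi_dominated s
  have hC0 : 0 ≤ C := by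
    have h := hC 1 one_pos 0 (by rw [abs_zero]; exact (mul_pos Real.pi_pos (sg_pos one_pos)).le)
    have := (norm_nonneg _).trans h
    simpa using this
  set G : ℕ → ℝ → ℂ := fun n τ =>
    psi n s τ * Complex.exp (Complex.I * (s * dn n + τ * en n : ℝ)) with hG
  have hGn : ∀ n τ, ‖G n τ‖ = ‖psi n s τ‖ := fun n τ => by
    rw [hG]; simp only [norm_mul, norm_exp_I_mul, mul_one]
  have hGc : ∀ n, Continuous (G n) := fun n => by
    simp only [hG, psi, cf]
    refine Continuous.mul (continuous_finsetProd _ fun k _ => ?_) (by fun_prop)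
    fun_prop
  have hlim : Tendsto (fun n => ∫ τ : ℝ,
      (Set.Ioc (-(Real.pi * sg n)) (Real.pi * sg n)).indicator (G n) τ) atTop
      (nhds (∫ τ : ℝ, φ * (Real.exp (-(τ ^ 2 / 2)) : ℝ))) := by
    refine tendsto_integral_filter_of_dominated_convergence (fun τ => C * (1 + τ ^ 2)⁻¹) ?_ ?_ ?_ ?_
    · exact Eventually.of_forall fun n =>
        (hGc n).aestronglyMeasurable.indicator measurableSet_Ioc
    · filter_upwards [eventually_gt_atTop 0] with n hn
      refine Eventually.of_forall fun τ => ?_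
      by_cases hτ : τ ∈ Set.Ioc (-(Real.pi * sg n)) (Real.pi * sg n)
      · rw [Set.indicator_of_mem hτ, hGn]
        exact hC n hn τ (abs_le.2 ⟨hτ.1.le, hτ.2⟩)
      · rw [Set.indicator_of_notMem hτ, norm_zero]
        positivity
    · exact integrable_inv_one_add_sq.const_mul C
    · refine Eventually.of_forall fun τ => ?_
      have h1 : Tendsto (fun n => G n τ) atTop (nhds (φ * (Real.exp (-(τ ^ 2 / 2)) : ℝ))) := by
        have h2 : Tendsto (fun n => Complex.exp (Complex.I * (s * dn n + τ * en n : ℝ))) atTop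
            (nhds 1) := by
          have h3 : Tendsto (fun n => s * dn n + τ * en n) atTop (nhds 0) := by
            have h6 : Tendsto dn atTop (nhds 0) := tendsto_mean_recip
            have h7 : Tendsto en atTop (nhds 0) := tendsto_mean_size
            simpa using (h6.const_mul s).add (h7.const_mul τ)
          have h4 : Continuous fun y : ℝ => Complex.exp (Complex.I * y) := by fun_prop
          have h8 := (h4.tendsto 0).comp h3
          rw [Complex.ofReal_zero, mul_zero, Complex.exp_zero] at h8
          exact h8
        have h9 := (tendsto_psi hφ τ).mul h2
        rw [mul_one] at h9
        exact h9
      refine h1.congr' ?_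
      have h5 : Tendsto (fun n => Real.pi * sg n) atTop atTop :=
        tendsto_sg.const_mul_atTop Real.pi_pos
      filter_upwards [h5.eventually_gt_atTop |τ|] with n hn
      rw [Set.indicator_of_mem]
      exact ⟨(abs_lt.1 hn).1, (abs_lt.1 hn).2.le⟩
  have hval : ∫ τ : ℝ, φ * (Real.exp (-(τ ^ 2 / 2)) : ℝ) = φ * (Real.sqrt (2 * Real.pi) : ℝ) := by
    rw [integral_const_mul, integral_complex_ofReal]
    congr 2
    have := integral_gaussian (1 / 2)
    rw [show Real.pi / (1 / 2) = 2 * Real.pi by ring] at this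
    rw [← this]
    congr 1; ext τ; congr 1; ring
  rw [hval] at hlim
  refine hlim.congr' ?_
  filter_upwards [eventually_gt_atTop 0] with n hn
  rw [← inversion hn, integral_indicator measurableSet_Ioc, intervalIntegral.integral_of_le]
  have := mul_pos Real.pi_pos (sg_pos hn)
  linarith

/-- The characteristic function under `P_n` converges: the normalisation `cn` cancels in the
ratio, since `Fn n 0` is the number of distinct parts partitions. -/
lemma tendsto_Fn_div {s : ℝ} {φ : ℂ}
    (hφ : Tendsto (fun m : ℕ => ∏ k ∈ Finset.Icc 1 m, (Real.cos (s / k) : ℂ)) atTop (nhds φ)) :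
    Tendsto (fun n => Fn n s / Fn n 0) atTop (nhds φ) := by
  have h0 := tendsto_cn_mul_Fn (s := 0) (φ := 1) (by simp)
  have h1 := tendsto_cn_mul_Fn hφ
  have hne : ((Real.sqrt (2 * Real.pi) : ℝ) : ℂ) ≠ 0 := by
    have : 0 < Real.sqrt (2 * Real.pi) := Real.sqrt_pos.2 (by positivity)
    exact_mod_cast this.ne'
  have h2 := h1.div h0 (by rwa [one_mul])
  rw [one_mul, mul_div_cancel_right₀ _ hne] at h2
  refine h2.congr' ?_
  filter_upwards [eventually_gt_atTop 0] with n hn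
  exact mul_div_mul_left _ _ (cn_ne hn)

/-! ### Weak convergence and conclusion -/

lemma distincts_card_pos (n : ℕ) : 0 < (Nat.Partition.distincts n).card := by
  refine Finset.card_pos.2 ⟨Nat.Partition.indiscrete n, ?_⟩
  simp only [Nat.Partition.distincts, Finset.mem_filter, Finset.mem_univ, true_and]
  rcases Nat.eq_zero_or_pos n with rfl | hn
  · simp [Nat.Partition.indiscrete, Nat.Partition.ofSums]
  · rw [Nat.Partition.indiscrete_parts hn.ne']
    exact Multiset.nodup_singleton n

/-- The law of `2 S - log √(3n)` under the uniform measure on distinct parts partitions. -/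
noncomputable def lawn (n : ℕ) : Measure ℝ :=
  ((Nat.Partition.distincts n).card : ℝ≥0∞)⁻¹ • ∑ lam ∈ Nat.Partition.distincts n,
    Measure.dirac (2 * S lam - Real.log (Real.sqrt (3 * n)))

instance lawn_prob (n : ℕ) : IsProbabilityMeasure (lawn n) where
  measure_univ := by
    have h := distincts_card_pos n
    simp only [lawn, Measure.smul_apply, Measure.finsetSum_apply, measure_univ,
      Finset.sum_const, nsmul_eq_mul, mul_one, smul_eq_mul]
    exact ENNReal.inv_mul_cancel (by exact_mod_cast h.ne') (ENNReal.natCast_ne_top _)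

lemma lawn_Iic (n : ℕ) (x : ℝ) : (lawn n (Set.Iic x)).toReal =
    Pn n (fun lam => 2 * S lam - Real.log (Real.sqrt (3 * n)) ≤ x) := by
  classical
  simp only [lawn, Measure.smul_apply, Measure.finsetSum_apply, smul_eq_mul,
    Measure.dirac_apply' _ measurableSet_Iic, Set.indicator_apply, Set.mem_Iic, Pi.one_apply]
  rw [Finset.sum_boole, ENNReal.toReal_mul, ENNReal.toReal_inv, ENNReal.toReal_natCast,
    ENNReal.toReal_natCast, Pn, div_eq_inv_mul]

lemma charFun_lawn (n : ℕ) (s : ℝ) : charFun (lawn n) s = Fn n s / Fn n 0 := by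
  have h0 : Fn n 0 = ((Nat.Partition.distincts n).card : ℂ) := by simp [Fn]
  rw [charFun_apply_real, lawn, integral_smul_measure, integral_finsetSum_measure
    (fun _ _ => integrable_dirac (by simp [enorm_lt_top]))]
  simp only [integral_dirac]
  rw [h0, Fn, ENNReal.toReal_inv, ENNReal.toReal_natCast, Complex.real_smul, div_eq_inv_mul]
  push_cast
  congr 1
  refine Finset.sum_congr rfl fun lam _ => ?_
  congr 1
  ring

theorem sum_reciprocal_parts_distribution
    (μ : Measure (ℕ → Bool)) [IsProbabilityMeasure μ]
    (hμ : ∀ (s : Finset ℕ) (f : ℕ → Bool),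
      μ {ω | ∀ k ∈ s, ω k = f k} = (1 / 2 : ℝ≥0∞) ^ s.card)
    (x : ℝ) :
    Tendsto
      (fun n : ℕ => Pn n (fun lam => 2 * S lam - Real.log (Real.sqrt (3 * n)) ≤ x))
      atTop
      (nhds ((μ {ω | ∃ l : ℝ, Tendsto (fun m => Hpart ω m) atTop (nhds l) ∧ l ≤ x}).toReal)) := by
  obtain ⟨ν, hν, hatom, hIic, hcf⟩ := exists_law_H hμ
  let νm : ProbabilityMeasure ℝ := ⟨ν, hν⟩
  let Pm : ℕ → ProbabilityMeasure ℝ := fun n => ⟨lawn n, lawn_prob n⟩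
  have hw : Tendsto Pm atTop (nhds νm) := by
    refine ProbabilityMeasure.tendsto_iff_tendsto_charFun.2 fun s => ?_
    simp only [Pm, νm, ProbabilityMeasure.coe_mk, charFun_lawn]
    exact tendsto_Fn_div (hcf s)
  have hE := ProbabilityMeasure.tendsto_measure_of_null_frontier_of_tendsto' hw
    (E := Set.Iic x) (by rw [frontier_Iic]; exact hatom x)
  simp only [Pm, νm, ProbabilityMeasure.coe_mk] at hE
  rw [hIic x] at hE
  have hR := (ENNReal.tendsto_toReal (measure_ne_top _ _)).comp hE
  refine hR.congr fun n => ?_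
  exact lawn_Iic n x
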